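/- For every k ∈ ℕ, every p ≤ p_k = 1 − (1/2)^{1/(k+1)} and every q ∈ [0,1], the percolation function of anisotropic bond percolation on the slab S^k satisfies θ(p,q) = 0. -/

import Mathlib

open MeasureTheory Set
open scoped ENNReal

namespace AnisoSlab

/-! ### A concrete construction of countable products of Bernoulli measures

The product Bernoulli measure on `ι → Bool` (each coordinate `i` open with
probability `P i`, independently) is realized as the pushforward of Lebesgue
measure on `[0,1)`: the binary digits of a uniform sample are i.i.d. fair
coins; regrouping them along a pairing function yields countably many
independent uniform samples, and comparing the `i`-th sample with `P i`
yields the desired independent Bernoulli coordinates. -/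

/-- The `n`-th binary digit of `x` (digits after the binary point). -/
noncomputable def binDigit (n : ℕ) (x : ℝ) : Bool :=
  decide (⌊x * 2 ^ (n + 1)⌋ % 2 = 1)

/-- Countably many independent uniform-`[0,1]` samples extracted from a single
uniform sample `x` on `[0,1)`, by regrouping its binary digits. -/
noncomputable def unifSample (i : ℕ) (x : ℝ) : ℝ :=
  ∑' n : ℕ, if binDigit (Nat.pair i n) x then ((2 : ℝ) ^ (n + 1))⁻¹ else 0

/-- The product Bernoulli measure on `ι → Bool`, coordinate `i` being `true`
with probability `P i`, independently over `i`. -/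
noncomputable def bernoulliProduct {ι : Type*} [Encodable ι] (P : ι → ℝ) :
    Measure (ι → Bool) :=
  Measure.map (fun x i => decide (unifSample (Encodable.encode i) x < P i))
    (volume.restrict (Set.Ico (0 : ℝ) 1))

/-! ### The slab `S^k` and anisotropic bond percolation on it -/

/-- Ambient vertices: `ℤ³`; the slab `S^k` uses those with third coordinate in `{0, …, k}`. -/
abbrev Vtx : Type := ℤ × ℤ × ℤ

/-- The three unit coordinate vectors. -/
def dvec : Fin 3 → Vtx
  | 0 => (1, 0, 0)
  | 1 => (0, 1, 0)
  | 2 => (0, 0, 1)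

/-- A bond is indexed by its lower endpoint `v` and a direction `i`; it joins
`v` to `v + dvec i`. Directions `0, 1` give radial (horizontal) bonds, and
direction `2` gives axial (vertical) bonds. -/
abbrev EdgeIdx : Type := Vtx × Fin 3

/-- A percolation configuration: each bond is open (`true`) or closed (`false`). -/
abbrev Config : Type := EdgeIdx → Bool

/-- `v` is a vertex of the slab `S^k`. -/
def InSlab (k : ℕ) (v : Vtx) : Prop := 0 ≤ v.2.2 ∧ v.2.2 ≤ k

/-- `(v, i)` is a bond of the slab `S^k` (both endpoints lie in the slab). -/
def IsEdge (k : ℕ) (e : EdgeIdx) : Prop := InSlab k e.1 ∧ InSlab k (e.1 + dvec e.2)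

/-- The measure `P_{p,q}` on configurations of `S^k`: each radial (horizontal)
bond is open with probability `p` and each axial (vertical) bond is open with
probability `q`, independently. -/
noncomputable def slabMeasure (k : ℕ) (p q : ℝ) : Measure Config :=
  bernoulliProduct (fun e => if e.2 = 2 then q else p)

/-- `x` and `y` are joined by an open bond of `S^k` in the configuration `ω`. -/
def OpenAdj (k : ℕ) (ω : Config) (x y : Vtx) : Prop :=
  ∃ i : Fin 3,
    (y = x + dvec i ∧ IsEdge k (x, i) ∧ ω (x, i) = true) ∨
    (x = y + dvec i ∧ IsEdge k (y, i) ∧ ω (y, i) = true)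

/-- The open cluster of the vertex `x` in the configuration `ω`. -/
def cluster (k : ℕ) (ω : Config) (x : Vtx) : Set Vtx :=
  {y | Relation.ReflTransGen (OpenAdj k ω) x y}

/-- The percolation function `θ(p,q) = P_{p,q}(0 ↔ ∞)`. -/
noncomputable def theta (k : ℕ) (p q : ℝ) : ℝ≥0∞ :=
  slabMeasure k p q {ω | (cluster k ω 0).Infinite}

/-- `p_k = 1 - (1/2)^{1/(k+1)}`, the horizontal critical value at `q = 1`. -/
noncomputable def pCrit (k : ℕ) : ℝ := 1 - (1 / 2 : ℝ) ^ ((1 : ℝ) / (k + 1))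

/-- The critical curve `q_c(p) = sup {q ∈ [0,1] : θ(p,q) = 0}`. -/
noncomputable def qc (k : ℕ) (p : ℝ) : ℝ :=
  sSup {q : ℝ | q ∈ Set.Icc (0 : ℝ) 1 ∧ theta k p q = 0}

/-- The critical curve `p_c(q) = sup {p ∈ [0,1] : θ(p,q) = 0}`. -/
noncomputable def pc (k : ℕ) (q : ℝ) : ℝ :=
  sSup {p : ℝ | p ∈ Set.Icc (0 : ℝ) 1 ∧ theta k p q = 0}

/-! Declare an edge of the square lattice open when one of the `k + 1` horizontal edges of the slab
above it is open. For `p = p_k` and any `q` this gives bond percolation with parameter `1 / 2`,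
because `(1 - p_k) ^ (k + 1) = 1 / 2`, and an infinite open cluster of the slab projects onto an
infinite one.

There is no infinite open cluster on the square lattice at `1 / 2`. Otherwise some square meets one
with probability close to `1`. By the square-root trick and self-duality, with probability close to
`1` open arms lead from this square into all eight octants of the boundary of any larger concentric
square, and dual open arms do so too. A winding number argument shows that dual arms separate three
of the open arms, so, opening the edges of the small square, one sees a coarse trifurcation with
probability bounded below. By translation, a square of side of order `K` then contains on average of
order `K ^ 2` disjoint coarse trifurcations, whereas, as in the argument of Burton and Keane, there
are never more of them than vertices on its boundary. -/

section UniformDigits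

open ProbabilityTheory (uniformOn uniformOn_univ)
open Real (digits ofDigits)

lemma measure_eq_of_singleton_le {α : Type*} [MeasurableSpace α] [MeasurableSingletonClass α]
    [Countable α] {μ ν : Measure α} [IsProbabilityMeasure μ] [IsProbabilityMeasure ν]
    (h : ∀ a, μ {a} ≤ ν {a}) : μ = ν := by
  refine Measure.eq_of_le_of_isProbabilityMeasure (Measure.le_intro fun s hs _ => ?_)
  rw [← μ.tsum_indicator_apply_singleton s hs, ← ν.tsum_indicator_apply_singleton s hs]
  exact ENNReal.tsum_le_tsum fun a => indicator_le_indicator (h a)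

lemma uniformOn_univ_singleton {α : Type*} [Fintype α] [MeasurableSpace α]
    [MeasurableSingletonClass α] (a : α) :
    uniformOn univ {a} = (Fintype.card α : ℝ≥0∞)⁻¹ := by
  rw [uniformOn_univ, Measure.count_singleton, one_div]

/-- The uniform distribution on `[0, 1)`. -/
noncomputable def unif : Measure ℝ := volume.restrict (Ico 0 1)

instance : IsProbabilityMeasure unif := ⟨by simp [unif]⟩

lemma unif_Iio {c : ℝ} (h1 : c ≤ 1) : unif (Iio c) = ENNReal.ofReal c := by
  have : Iio c ∩ Ico 0 1 = Ico 0 c := by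
    ext x
    simp only [mem_inter_iff, mem_Iio, mem_Ico]
    exact ⟨fun h => ⟨h.2.1, h.1⟩, fun h => ⟨h.2, h.1, h.2.trans_le h1⟩⟩
  rw [unif, Measure.restrict_apply measurableSet_Iio, this, Real.volume_Ico, sub_zero]

lemma measurable_digits (b : ℕ) [NeZero b] : Measurable fun x => digits x b :=
  measurable_pi_iff.2 fun n => measurable_from_top.comp
    (Nat.measurable_floor.comp (measurable_id.mul_const ((b : ℝ) ^ (n + 1))))

lemma unif_agreeing_digits_le {b : ℕ} [NeZero b] (hb : 1 < b) (n : ℕ) (a : ℕ → Fin b) :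
    unif {x | ∀ i < n, digits x b i = a i} ≤ ((b : ℝ≥0∞) ^ n)⁻¹ := by
  have hb0 : (0 : ℝ) < b := by exact_mod_cast hb.pos
  rw [unif, Measure.restrict_apply' measurableSet_Ico]
  calc volume ({x | ∀ i < n, digits x b i = a i} ∩ Ico 0 1)
      ≤ Metric.ediam ({x | ∀ i < n, digits x b i = a i} ∩ Ico 0 1) := Real.volume_le_diam _
    _ ≤ ENNReal.ofReal ((b : ℝ) ^ n)⁻¹ := Metric.ediam_le fun x hx y hy => by
        rw [edist_dist, Real.dist_eq, ← Real.ofDigits_digits hb hx.2,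
          ← Real.ofDigits_digits hb hy.2]
        exact ENNReal.ofReal_le_ofReal
          (Real.abs_ofDigits_sub_ofDigits_le fun i hi => (hx.1 i hi).trans (hy.1 i hi).symm)
    _ = ((b : ℝ≥0∞) ^ n)⁻¹ := by
        rw [ENNReal.ofReal_inv_of_pos (pow_pos hb0 n), ENNReal.ofReal_pow hb0.le,
          ENNReal.ofReal_natCast]

theorem map_digits_unif {b : ℕ} [NeZero b] (hb : 1 < b) :
    unif.map (fun x => digits x b) =
      Measure.infinitePi fun _ : ℕ => uniformOn (univ : Set (Fin b)) := by
  have hmeas := measurable_digits b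
  refine ((isProjectiveLimit_nat_iff (isProjectiveMeasureFamily_pi
    fun _ => uniformOn (univ : Set (Fin b))) _).2 fun n => ?_).unique
    (Measure.isProjectiveLimit_infinitePi fun _ : ℕ => uniformOn (univ : Set (Fin b)))
  have hmap : Measurable (Preorder.frestrictLe (π := fun _ => Fin b) n ∘ fun x => digits x b) :=
    (Preorder.measurable_frestrictLe n).comp hmeas
  rw [Measure.map_map (Preorder.measurable_frestrictLe n) hmeas]
  have := Measure.isProbabilityMeasure_map (μ := unif) hmap.aemeasurable
  refine measure_eq_of_singleton_le fun a => ?_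
  rw [Measure.map_apply hmap (measurableSet_singleton a), Measure.pi_singleton]
  simp only [uniformOn_univ_singleton, Fintype.card_fin, Finset.prod_const, Finset.card_univ,
    Fintype.card_coe, Nat.card_Iic]
  rw [← ENNReal.inv_pow]
  refine (measure_mono ?_).trans (unif_agreeing_digits_le hb (n + 1)
    fun i => if h : i ≤ n then a ⟨i, Finset.mem_Iic.2 h⟩ else 0)
  rintro x rfl i hi
  simp [Nat.lt_succ_iff.1 hi]

theorem map_ofDigits_infinitePi {b : ℕ} [NeZero b] (hb : 1 < b) :
    (Measure.infinitePi fun _ : ℕ => uniformOn (univ : Set (Fin b))).map ofDigits = unif := by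
  rw [← map_digits_unif hb,
    Measure.map_map Real.continuous_ofDigits.measurable (measurable_digits b)]
  refine (Measure.map_congr ?_).trans Measure.map_id
  filter_upwards [ae_restrict_mem measurableSet_Ico] with x hx using Real.ofDigits_digits hb hx

end UniformDigits

section Blocks

lemma infinitePi_map_block {ι κ J X Y : Type*} [MeasurableSpace X] [MeasurableSpace Y]
    (ν : Measure X) [IsProbabilityMeasure ν] {f : ι × κ → J} (hf : Function.Injective f)
    {g : (κ → X) → Y} (hg : Measurable g) :
    (Measure.infinitePi fun _ : J => ν).map (fun x i => g fun k => x (f (i, k))) =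
      Measure.infinitePi fun _ : ι => (Measure.infinitePi fun _ : κ => ν).map g := by
  rw [← Measure.infinitePi_map_pi (fun _ => Measure.infinitePi fun _ : κ => ν) fun _ => hg,
    ← Measure.infinitePi_map_curry fun (_ : ι) (_ : κ) => ν,
    ← Measure.map_infinitePi_infinitePi_of_inj (P := fun _ : J => ν) hf,
    Measure.map_map (by fun_prop) (by fun_prop), Measure.map_map (by fun_prop) (by fun_prop)]
  rfl

end Blocks

section Bernoulli

open ProbabilityTheory (uniformOn)
open Real (digits ofDigits)

lemma binDigit_eq_digits {x : ℝ} (hx : 0 ≤ x) (n : ℕ) :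
    binDigit n x = decide (digits x 2 n = 1) := by
  have hfloor : ⌊x * 2 ^ (n + 1)⌋ = (⌊x * 2 ^ (n + 1)⌋₊ : ℤ) :=
    (Int.natCast_floor_eq_floor (by positivity)).symm
  rw [binDigit, hfloor, digits, decide_eq_decide, Fin.ext_iff]
  norm_cast

lemma unifSample_eq_ofDigits {x : ℝ} (hx : 0 ≤ x) (i : ℕ) :
    unifSample i x = ofDigits fun n => digits x 2 (Nat.pair i n) := by
  refine tsum_congr fun n => ?_
  rw [binDigit_eq_digits hx, Real.ofDigitsTerm]
  generalize digits x 2 (Nat.pair i n) = d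
  fin_cases d <;> simp

lemma map_ofDigits_digits_pair_unif :
    unif.map (fun x i => ofDigits fun n => digits x 2 (Nat.pair i n)) =
      Measure.infinitePi fun _ : ℕ => unif := by
  have hpair : Function.Injective fun z : ℕ × ℕ => Nat.pair z.1 z.2 := fun a b h =>
    Prod.ext_iff.2 (Nat.pair_eq_pair.1 h)
  have hblock := infinitePi_map_block (uniformOn (univ : Set (Fin 2))) hpair
    Real.continuous_ofDigits.measurable
  have hregroup : Measurable fun (a : ℕ → Fin 2) i => ofDigits fun n => a (Nat.pair i n) :=
    measurable_pi_iff.2 fun i => Real.continuous_ofDigits.measurable.comp (by fun_prop)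
  rw [map_ofDigits_infinitePi one_lt_two, ← map_digits_unif one_lt_two,
    Measure.map_map hregroup (measurable_digits 2)] at hblock
  exact hblock

lemma measurable_decide_lt (c : ℝ) : Measurable fun u : ℝ => decide (u < c) :=
  measurable_to_bool (by simpa only [preimage, mem_singleton_iff, decide_eq_true_eq]
    using! measurableSet_Iio (a := c))

lemma measurable_decide_lt_pi {ι : Type*} (P : ι → ℝ) :
    Measurable fun (u : ι → ℝ) i => decide (u i < P i) :=
  measurable_pi_iff.2 fun i => (measurable_decide_lt (P i)).comp (measurable_pi_apply i)

theorem bernoulliProduct_eq_map_infinitePi {ι : Type*} [Encodable ι] (P : ι → ℝ) :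
    bernoulliProduct P =
      (Measure.infinitePi fun _ : ι => unif).map fun u i => decide (u i < P i) := by
  have hdigits : Measurable fun x i => ofDigits fun n => digits x 2 (Nat.pair i n) :=
    measurable_pi_iff.2 fun i => Real.continuous_ofDigits.measurable.comp <|
      measurable_pi_iff.2 fun n => (measurable_pi_apply _).comp (measurable_digits 2)
  rw [← Measure.map_infinitePi_infinitePi_of_inj (P := fun _ : ℕ => unif)
      (Encodable.encode_injective (α := ι)), ← map_ofDigits_digits_pair_unif,
    Measure.map_map (by fun_prop) hdigits,
    Measure.map_map (measurable_decide_lt_pi P) (.comp (by fun_prop) hdigits)]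
  refine Measure.map_congr ?_
  filter_upwards [ae_restrict_mem measurableSet_Ico] with x hx
  exact funext fun i => by
    simp only [Function.comp_apply, unifSample_eq_ofDigits hx.1]

lemma bernoulliProduct_mono {ι : Type*} [Encodable ι] {P Q : ι → ℝ} (hPQ : P ≤ Q)
    {A : Set (ι → Bool)} (hA : MeasurableSet A) (hup : IsUpperSet A) :
    bernoulliProduct P A ≤ bernoulliProduct Q A := by
  rw [bernoulliProduct_eq_map_infinitePi, bernoulliProduct_eq_map_infinitePi,
    Measure.map_apply (measurable_decide_lt_pi P) hA,
    Measure.map_apply (measurable_decide_lt_pi Q) hA]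
  refine measure_mono fun u hu => hup (fun i => ?_) hu
  simpa only [Bool.le_iff_imp, decide_eq_true_eq] using fun h => h.trans_le (hPQ i)

end Bernoulli

section ProductMeasure

open ProbabilityTheory

variable {ι : Type*} {X : ι → Type*} [∀ i, MeasurableSpace (X i)]

section DependsOn

variable {A B : Set (∀ i, X i)}

lemma measurableSet_of_dependsOn [∀ i, Finite (X i)] [∀ i, MeasurableSingletonClass (X i)]
    {F : Set ι} (hF : F.Finite) (hA : DependsOn (· ∈ A) F) : MeasurableSet A := by
  have : Finite F := hF
  have hpre : A = F.domRestrict ⁻¹' (F.domRestrict '' A) := by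
    refine (subset_preimage_image _ _).antisymm ?_
    rintro ω ⟨ω', hω', h⟩
    exact (hA fun i hi => congrFun h ⟨i, hi⟩).mp hω'
  rw [hpre]
  exact Set.measurable_restrict F (toFinite _).measurableSet

lemma measurableSet_cylinderEvents_of_dependsOn {S : Set ι} (hA : MeasurableSet A)
    (hS : DependsOn (· ∈ A) S) : MeasurableSet[cylinderEvents S] A := by
  classical
  rcases A.eq_empty_or_nonempty with rfl | ⟨ω₀, -⟩
  · exact @MeasurableSet.empty _ (cylinderEvents S)
  let freeze : (∀ i, X i) → ∀ i, X i := fun ω i => if i ∈ S then ω i else ω₀ i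
  have hfreeze : Measurable[cylinderEvents S] freeze :=
    @measurable_pi_lambda _ _ _ (cylinderEvents S) _ freeze fun i => by
      by_cases hi : i ∈ S
      · simpa only [freeze, hi, if_true] using measurable_cylinderEvent_apply hi
      · simpa only [freeze, hi, if_false] using @measurable_const _ _ _ (cylinderEvents S) _
  have hpre : A = freeze ⁻¹' A :=
    ext fun ω => (hS fun i hi => by simp only [freeze, hi, if_true]).to_iff
  rw [hpre]
  exact hfreeze hA

variable (P : ∀ i, Measure (X i)) [∀ i, IsProbabilityMeasure (P i)]

lemma iIndep_comap_eval_infinitePi :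
    iIndep (fun i => MeasurableSpace.comap (fun ω : ∀ i, X i => ω i) inferInstance)
      (Measure.infinitePi P) :=
  iIndepFun_infinitePi (X := fun _ x => x) fun _ => measurable_id

lemma infinitePi_inter_of_disjoint {S T : Set ι} (hST : Disjoint S T) (hA : MeasurableSet A)
    (hB : MeasurableSet B) (hAS : DependsOn (· ∈ A) S) (hBT : DependsOn (· ∈ B) T) :
    Measure.infinitePi P (A ∩ B) = Measure.infinitePi P A * Measure.infinitePi P B :=
  (Indep_iff _ _ _).1 (indep_iSup_of_disjoint (fun i => (measurable_pi_apply i).comap_le)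
    (iIndep_comap_eval_infinitePi P) hST) A B (measurableSet_cylinderEvents_of_dependsOn hA hAS)
    (measurableSet_cylinderEvents_of_dependsOn hB hBT)

theorem infinitePi_zero_or_one_of_dependsOn_compl (hA : MeasurableSet A)
    (hT : ∀ F : Set ι, F.Finite → DependsOn (· ∈ A) Fᶜ) :
    Measure.infinitePi P A = 0 ∨ Measure.infinitePi P A = 1 := by
  classical
  refine measure_zero_or_one_of_measurableSet_limsup (f := Filter.cofinite) (p := Set.Finite)
    (ns := fun F : Finset ι => (F : Set ι)) (fun i => (measurable_pi_apply i).comap_le)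
    (iIndep_comap_eval_infinitePi P) (fun t ht => ht.compl_mem_cofinite)
    (directed_of_isDirected_le fun _ _ => Finset.coe_subset.2) Finset.finite_toSet
    (fun i => ⟨{i}, by simp⟩) ?_
  rw [Filter.limsup_eq_iInf_iSup, MeasurableSpace.measurableSet_iInf]
  refine fun S => MeasurableSpace.measurableSet_iInf.2 fun hS => ?_
  exact measurableSet_cylinderEvents_of_dependsOn hA (compl_compl S ▸ hT Sᶜ hS)

end DependsOn

section Harris

variable {α : Type*} [Finite α] [LinearOrder α] [MeasurableSpace α] [MeasurableSingletonClass α]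

lemma pi_harris {κ : Type*} [Fintype κ] (P : κ → Measure α) [∀ i, IsProbabilityMeasure (P i)]
    {A B : Set (κ → α)} (hA : IsUpperSet A) (hB : IsUpperSet B) :
    (Measure.pi P).real A * (Measure.pi P).real B ≤ (Measure.pi P).real (A ∩ B) := by
  classical
  have := Fintype.ofFinite α
  have hreal (C : Set (κ → α)) : (Measure.pi P).real C =
      ∑ a, (Measure.pi P).real {a} * C.indicator 1 a := by
    rw [← coe_toFinset C, ← sum_measureReal_singleton]
    simp [indicator_apply, Finset.sum_ite]
  have hmono {C : Set (κ → α)} (hC : IsUpperSet C) : Monotone (C.indicator (1 : (κ → α) → ℝ)) :=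
    fun a b hab => by
      by_cases ha : a ∈ C
      · rw [indicator_of_mem ha, indicator_of_mem (hC hab ha)]
        rfl
      · rw [indicator_of_notMem ha]
        exact indicator_nonneg (fun _ _ => zero_le_one) b
  have hlattice (a b : κ → α) : (Measure.pi P).real {a} * (Measure.pi P).real {b} =
      (Measure.pi P).real {a ⊓ b} * (Measure.pi P).real {a ⊔ b} := by
    simp only [Measure.real, Measure.pi_singleton, ENNReal.toReal_prod, ← Finset.prod_mul_distrib]
    refine Finset.prod_congr rfl fun i _ => ?_
    rcases le_total (a i) (b i) with h | h <;> simp [h, mul_comm]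
  have := fkg (μ := fun a => (Measure.pi P).real {a}) (f := A.indicator 1) (g := B.indicator 1)
    (fun a => measureReal_nonneg) (indicator_nonneg fun _ _ => zero_le_one)
    (indicator_nonneg fun _ _ => zero_le_one) (hmono hA) (hmono hB)
    (fun a b => (hlattice a b).le)
  have htotal : ∑ a, (Measure.pi P).real {a} = 1 := by simp
  simpa only [← Pi.mul_apply (A.indicator _), ← inter_indicator_one, ← hreal, htotal,
    one_mul] using this

theorem infinitePi_harris (P : ι → Measure α) [∀ i, IsProbabilityMeasure (P i)]
    {F : Finset ι} {A B : Set (ι → α)} (hA : IsUpperSet A) (hB : IsUpperSet B)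
    (hAF : DependsOn (· ∈ A) (F : Set ι)) (hBF : DependsOn (· ∈ B) (F : Set ι)) :
    (Measure.infinitePi P).real A * (Measure.infinitePi P).real B ≤
      (Measure.infinitePi P).real (A ∩ B) := by
  classical
  have hpre {C : Set (ι → α)} (hC : DependsOn (· ∈ C) (F : Set ι)) :
      F.restrict ⁻¹' (F.restrict '' C) = C := by
    refine subset_antisymm ?_ (subset_preimage_image _ _)
    rintro ω ⟨ω', hω', h⟩
    exact (hC fun i hi => congrFun h ⟨i, hi⟩).mp hω'
  have hupper {C : Set (ι → α)} (hC : IsUpperSet C) : IsUpperSet (F.restrict '' C) := by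
    rintro _ b hab ⟨ω, hω, rfl⟩
    refine ⟨fun i => if hi : i ∈ F then b ⟨i, hi⟩ else ω i, hC (fun i => ?_) hω, ?_⟩
    · split_ifs with hi
      exacts [hab ⟨i, hi⟩, le_rfl]
    · exact funext fun i => by simp
  have hreal (T : Set (F → α)) : (Measure.infinitePi P).real (F.restrict ⁻¹' T) =
      (Measure.pi fun i : F => P i).real T := by
    rw [← map_measureReal_apply (Finset.measurable_restrict F) (toFinite T).measurableSet,
      Measure.infinitePi_map_restrict]
  have := pi_harris (fun i : F => P i) (hupper hA) (hupper hB)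
  rwa [← hreal, ← hreal, ← hreal, preimage_inter, hpre hAF, hpre hBF] at this

theorem prod_one_sub_le_one_sub_iUnion (P : ι → Measure α) [∀ i, IsProbabilityMeasure (P i)]
    {F : Finset ι} {κ : Type*} (s : Finset κ) {A : κ → Set (ι → α)} (hA : ∀ t, IsUpperSet (A t))
    (hAF : ∀ t, DependsOn (· ∈ A t) (F : Set ι)) :
    ∏ t ∈ s, (1 - (Measure.infinitePi P).real (A t)) ≤
      1 - (Measure.infinitePi P).real (⋃ t ∈ s, A t) := by
  classical
  induction s using Finset.induction_on with
  | empty => simp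
  | insert t s ht ih =>
    set U := ⋃ t ∈ s, A t with hU
    have hUup : IsUpperSet U := isUpperSet_iUnion₂ fun t _ => hA t
    have hUF : DependsOn (· ∈ U) (F : Set ι) := fun ω ω' h => by
      simp only [hU, mem_iUnion, fun t => hAF t h]
    have hharris := infinitePi_harris P (hA t) hUup (hAF t) hUF
    have hUmeas := measurableSet_of_dependsOn F.finite_toSet hUF
    have hunion := measureReal_union_add_inter (μ := Measure.infinitePi P) (s := A t) hUmeas
      (measure_ne_top _ _) (measure_ne_top _ _)
    have ht1 : (Measure.infinitePi P).real (A t) ≤ 1 := measureReal_le_one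
    rw [Finset.prod_insert ht, Finset.set_biUnion_insert]
    calc _ ≤ (1 - (Measure.infinitePi P).real (A t)) * (1 - (Measure.infinitePi P).real U) := by
          gcongr
      _ ≤ 1 - (Measure.infinitePi P).real (A t ∪ U) := by linarith

end Harris

lemma sum_measureReal_le_of_card_le {Ω κ : Type*} [MeasurableSpace Ω] (μ : Measure Ω)
    [IsProbabilityMeasure μ] {I : Finset κ} {A : κ → Set Ω} (hA : ∀ i ∈ I, MeasurableSet (A i))
    {M : ℕ} (hM : ∀ J ⊆ I, (⋂ i ∈ J, A i).Nonempty → J.card ≤ M) :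
    ∑ i ∈ I, μ.real (A i) ≤ M := by
  classical
  have hint (i) (hi : i ∈ I) : Integrable ((A i).indicator (1 : Ω → ℝ)) μ :=
    (integrable_const 1).indicator (hA i hi)
  have hcount (ω : Ω) : ∑ i ∈ I, (A i).indicator (1 : Ω → ℝ) ω ≤ M := by
    simp only [indicator_apply, Pi.one_apply, Finset.sum_boole]
    exact_mod_cast hM _ (Finset.filter_subset _ I) ⟨ω, by simp⟩
  calc ∑ i ∈ I, μ.real (A i) = ∫ ω, ∑ i ∈ I, (A i).indicator 1 ω ∂μ := by
        rw [integral_finsetSum I hint]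
        exact Finset.sum_congr rfl fun i hi => (integral_indicator_one (hA i hi)).symm
    _ ≤ ∫ _, (M : ℝ) ∂μ := integral_mono (integrable_finsetSum I hint) (integrable_const _) hcount
    _ = M := by simp

end ProductMeasure

section Trifurcation

variable {V : Type*} {G H : SimpleGraph V} {B B' D E S T : Set V} {a b t : V}

/-- The graph keeping only the edges of `G` with both endpoints in `S`. The vertex type is
unchanged, so that graphs confined to different sets can be compared. -/
def confine (G : SimpleGraph V) (S : Set V) : SimpleGraph V where
  Adj a b := G.Adj a b ∧ a ∈ S ∧ b ∈ S
  symm := ⟨fun _ _ h => ⟨h.1.symm, h.2.2, h.2.1⟩⟩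
  loopless := ⟨fun a h => G.loopless.irrefl a h.1⟩

lemma confine_mono (hGH : G ≤ H) (hST : S ⊆ T) : confine G S ≤ confine H T :=
  fun _ _ h => ⟨hGH h.1, hST h.2.1, hST h.2.2⟩

lemma confine_le : confine G S ≤ G := fun _ _ h => h.1

lemma reachable_comap_equiv {W : Type*} (φ : V ≃ W) (G : SimpleGraph W) {a b : V} :
    (G.comap φ).Reachable a b ↔ G.Reachable (φ a) (φ b) :=
  (SimpleGraph.Iso.comap φ G).reachable_iff.symm

lemma exists_adj_of_reachable (h : G.Reachable a b) (ha : a ∉ B) (hb : b ∈ B) :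
    ∃ w ∉ B, (confine G Bᶜ).Reachable a w ∧ ∃ u ∈ B, G.Adj w u := by
  obtain ⟨p⟩ := h
  induction p with
  | nil => exact absurd hb ha
  | @cons a c _ hac _ ih =>
    by_cases hc : c ∈ B
    · exact ⟨a, ha, .rfl, c, hc, hac⟩
    · obtain ⟨w, hw, hcw, hu⟩ := ih hc hb
      have hac' : (confine G Bᶜ).Adj a c := ⟨hac, ha, hc⟩
      exact ⟨w, hw, hac'.reachable.trans hcw, hu⟩

lemma exists_finset_reachable_confine (h : G.Reachable a b) :
    ∃ S : Finset V, (confine G S).Reachable a b := by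
  classical
  obtain ⟨p⟩ := h
  induction p with
  | nil => exact ⟨∅, .rfl⟩
  | @cons a c _ hac _ ih =>
    obtain ⟨S, hS⟩ := ih
    have hac' : (confine G ↑(insert a (insert c S))).Adj a c := ⟨hac, by simp, by simp⟩
    exact ⟨insert a (insert c S), hac'.reachable.trans
      (hS.mono (confine_mono le_rfl (by simp [Set.subset_def]; tauto)))⟩

/-- The vertex `a` is joined to the set `B` in `G`. -/
def Hits (G : SimpleGraph V) (B : Set V) (a : V) : Prop := ∃ b ∈ B, G.Reachable a b

lemma Hits.mono (hGH : G ≤ H) (h : Hits G B a) : Hits H B a :=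
  let ⟨b, hb, hab⟩ := h
  ⟨b, hb, hab.mono hGH⟩

lemma Hits.of_adj_off (hGH : ∀ a ∉ B, ∀ b, G.Adj a b → H.Adj a b) (h : Hits G B a) :
    Hits H B a := by
  obtain ⟨b, hb, hab⟩ := h
  by_cases ha : a ∈ B
  · exact ⟨a, ha, .rfl⟩
  · obtain ⟨w, hw, haw, u, hu, hwu⟩ := exists_adj_of_reachable hab ha hb
    have hle : confine G Bᶜ ≤ H := fun x y hxy => hGH x hxy.2.1 y hxy.1
    exact ⟨u, hu, (haw.mono hle).trans (hGH w hw u hwu).reachable⟩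

lemma Hits.reachable_of_confine (hB : ∀ a ∈ B, ∀ b ∈ B, (confine G B).Reachable a b)
    (hBS : B ⊆ S) (ha : Hits (confine G S) B a) (hb : Hits (confine G S) B b) :
    (confine G S).Reachable a b := by
  obtain ⟨x, hx, hax⟩ := ha
  obtain ⟨y, hy, hby⟩ := hb
  exact hax.trans (((hB x hx y hy).mono (confine_mono le_rfl hBS)).trans hby.symm)

lemma Hits.confine_compl_or (hBB' : Disjoint B B') (h : Hits G B t) :
    Hits (confine G B'ᶜ) B t ∨ Hits (confine G Bᶜ) B' t := by
  obtain ⟨b, hb, htb⟩ := h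
  by_cases ht : t ∈ B ∪ B'
  · exact ht.imp (fun h => ⟨t, h, .rfl⟩) fun h => ⟨t, h, .rfl⟩
  obtain ⟨w, hw, htw, u, hu, hwu⟩ := exists_adj_of_reachable htb ht (subset_union_left hb)
  simp only [mem_union, not_or] at hw
  refine hu.imp (fun huB => ⟨u, huB, ?_⟩) fun huB' => ⟨u, huB', ?_⟩
  · have hwu' : (confine G B'ᶜ).Adj w u := ⟨hwu, hw.2, hBB'.notMem_of_mem_left huB⟩
    exact (htw.mono (confine_mono le_rfl (by simp))).trans hwu'.reachable
  · have hwu' : (confine G Bᶜ).Adj w u := ⟨hwu, hw.1, hBB'.notMem_of_mem_right huB'⟩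
    exact (htw.mono (confine_mono le_rfl (by simp))).trans hwu'.reachable

/-- The set `B` is a coarse trifurcation of `G` towards `E`: three points of `E` are joined to
`B`, and removing `B` separates them from one another. -/
def IsTrifurcation (G : SimpleGraph V) (B E : Set V) : Prop :=
  ∃ z : Fin 3 → V, (∀ i, z i ∈ E ∧ Hits G B (z i)) ∧
    Pairwise fun i j => ¬(confine G Bᶜ).Reachable (z i) (z j)

lemma IsTrifurcation.of_adj_iff_off (hGH : ∀ a ∉ B, ∀ b, G.Adj a b ↔ H.Adj a b)
    (h : IsTrifurcation G B E) : IsTrifurcation H B E := by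
  obtain ⟨z, hz, hsep⟩ := h
  have hle : confine H Bᶜ ≤ confine G Bᶜ := fun a b hab => ⟨(hGH a hab.2.1 b).2 hab.1, hab.2⟩
  exact ⟨z, fun i => ⟨(hz i).1, (hz i).2.of_adj_off fun a ha b => (hGH a ha b).1⟩,
    fun i j hij hr => hsep hij (hr.mono hle)⟩

lemma IsTrifurcation.of_comap {W : Type*} {G : SimpleGraph W} {B E : Set W} (φ : V ≃ W)
    (h : IsTrifurcation (G.comap φ) (φ ⁻¹' B) (φ ⁻¹' E)) : IsTrifurcation G B E := by
  obtain ⟨z, hz, hsep⟩ := h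
  refine ⟨fun i => φ (z i), fun i => ⟨(hz i).1, ?_⟩, fun i j hij hr =>
    hsep hij ((reachable_comap_equiv φ (confine G Bᶜ)).2 hr)⟩
  obtain ⟨b, hb, hzb⟩ := (hz i).2
  exact ⟨φ b, hb, (reachable_comap_equiv φ G).1 hzb⟩

/-- Replacing `S` by a smaller region `D` moves the ends of the three branches to the places
where they first leave `D`. -/
lemma IsTrifurcation.confine_of_subset {E' : Set V} (h : IsTrifurcation (confine G S) B E)
    (hDS : D ⊆ S) (hED : Disjoint E D) (hBD : B ⊆ D) (hBN : ∀ b ∈ B, ∀ a, G.Adj a b → a ∈ D)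
    (hE' : ∀ a ∈ D, ∀ b ∉ D, G.Adj a b → a ∈ E') : IsTrifurcation (confine G D) B E' := by
  obtain ⟨z, hz, hsep⟩ := h
  have hexit (i : Fin 3) : ∃ y ∈ E', Hits (confine G D) B y ∧
      (confine (confine G S) Bᶜ).Reachable y (z i) := by
    obtain ⟨hzE, b, hb, hzb⟩ := hz i
    have hzD := hED.notMem_of_mem_left hzE
    obtain ⟨w, -, hzw, u, hu, hwu⟩ := exists_adj_of_reachable hzb (fun h => hzD (hBD h)) hb
    have hwD := hBN u hu w hwu.1
    obtain ⟨y, hy, hwy, x, hx, hyx⟩ :=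
      exists_adj_of_reachable (B := Dᶜ) hzw.symm (not_not_intro hwD) hzD
    have hwu' : (confine G D).Adj w u := ⟨hwu.1, hwD, hBD hu⟩
    have hle : confine (confine (confine G S) Bᶜ) Dᶜᶜ ≤ confine G D :=
      fun _ _ h => ⟨h.1.1.1, not_not.1 h.2.1, not_not.1 h.2.2⟩
    exact ⟨y, hE' y (not_not.1 hy) x hx hyx.1.1,
      ⟨u, hu, (hwy.symm.mono hle).trans hwu'.reachable⟩,
      (hwy.symm.mono confine_le).trans hzw.symm⟩
  choose y hyE' hyB hyz using hexit
  have hle : confine (confine G D) Bᶜ ≤ confine (confine G S) Bᶜ :=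
    confine_mono (confine_mono le_rfl hDS) le_rfl
  exact ⟨y, fun i => ⟨hyE' i, hyB i⟩, fun i j hij hr =>
    hsep hij ((hyz i).symm.trans ((hr.mono hle).trans (hyz j)))⟩

section Roots

variable [LinearOrder V]

/-- `t` is the least point of `E` on its branch at `B`, where the branches at `B` are the
components of `G` that are joined to `B` once `B` is removed. -/
def IsBranchRoot (G : SimpleGraph V) (B E : Set V) (t : V) : Prop :=
  t ∈ E ∧ Hits G B t ∧ ∀ s ∈ E, s < t → ¬(confine G Bᶜ).Reachable t s

/-- `v` is a branch root at `B`, and `B` has two further branch roots below `v`. -/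
def IsApex (G : SimpleGraph V) (B E : Set V) (v : V) : Prop :=
  IsBranchRoot G B E v ∧ ∃ r s, r ≠ s ∧ r < v ∧ s < v ∧ IsBranchRoot G B E r ∧
    IsBranchRoot G B E s

lemma IsBranchRoot.not_reachable {s : V} (ht : IsBranchRoot G B E t) (hs : IsBranchRoot G B E s)
    (hts : t ≠ s) : ¬(confine G Bᶜ).Reachable t s := fun h =>
  hts.lt_or_gt.elim (fun hlt => hs.2.2 t ht.1 hlt h.symm) fun hlt => ht.2.2 s hs.1 hlt h

lemma IsTrifurcation.exists_isApex [WellFoundedLT V] (h : IsTrifurcation G B E) :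
    ∃ v, IsApex G B E v := by
  obtain ⟨z, hz, hsep⟩ := h
  have hroot (i : Fin 3) : ∃ t, IsBranchRoot G B E t ∧ (confine G Bᶜ).Reachable (z i) t := by
    obtain ⟨hzE, b, hb, hzb⟩ := hz i
    obtain ⟨t, ⟨htE, hzt⟩, hmin⟩ := wellFounded_lt.has_min
      {t | t ∈ E ∧ (confine G Bᶜ).Reachable (z i) t} ⟨z i, hzE, .rfl⟩
    exact ⟨t, ⟨htE, ⟨b, hb, (hzt.mono confine_le).symm.trans hzb⟩,
      fun s hs hst hts => hmin s ⟨hs, hzt.trans hts⟩ hst⟩, hzt⟩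
  choose r hr hzr using hroot
  have hinj : Function.Injective r := fun i j hij => by
    by_contra hne
    exact hsep hne ((hzr i).trans (hij ▸ (hzr j).symm))
  obtain ⟨k, hk⟩ := Finite.exists_max r
  have hlt (i : Fin 3) (hik : i ≠ k) : r i < r k := (hk i).lt_of_ne (hinj.ne hik)
  obtain ⟨i, j, hij, hik, hjk⟩ : ∃ i j : Fin 3, i ≠ j ∧ i ≠ k ∧ j ≠ k := by
    clear * -
    decide +revert
  exact ⟨r k, hr k, r i, r j, hinj.ne hij, hlt i hik, hlt j hjk, hr i, hr j⟩

lemma not_isApex_of_isApex {v : V} (hBB' : Disjoint B B')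
    (hB : ∀ a ∈ B, ∀ b ∈ B, (confine G B).Reachable a b)
    (hB' : ∀ a ∈ B', ∀ b ∈ B', (confine G B').Reachable a b)
    (hv : IsApex G B E v) : ¬IsApex G B' E v := by
  -- Say `v` sees `B'` around `B`. No `t < v` in `E` does, since `v` is least on its branch at `B`;
  -- so the two smaller branch roots at `B'` both see `B` around `B'`, hence share a branch at `B'`.
  intro hv'
  wlog hvB' : Hits (confine G Bᶜ) B' v generalizing B B'
  · exact this hBB'.symm hB' hB hv' hv ((hv.1.2.1.confine_compl_or hBB').resolve_right hvB')
  obtain ⟨-, r, s, hrs, hrv, hsv, hr, hs⟩ := hv'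
  have hBB'c := hBB'.subset_compl_right
  have hB'Bc := hBB'.subset_compl_left
  have hnot {t : V} (ht : t ∈ E) (htv : t < v) : ¬Hits (confine G Bᶜ) B' t := fun h =>
    hv.1.2.2 t ht htv (hvB'.reachable_of_confine hB' hB'Bc h)
  have hroot {t : V} (ht : IsBranchRoot G B' E t) (htv : t < v) : Hits (confine G B'ᶜ) B t :=
    (ht.2.1.confine_compl_or hBB'.symm).resolve_left (hnot ht.1 htv)
  exact hr.not_reachable hs hrs ((hroot hr hrv).reachable_of_confine hB hBB'c (hroot hs hsv))

end Roots

theorem card_le_of_isTrifurcation {κ : Type*} {I : Finset κ} {E : Finset V} {B : κ → Set V}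
    (hdisj : (I : Set κ).PairwiseDisjoint B)
    (hconn : ∀ i ∈ I, ∀ a ∈ B i, ∀ b ∈ B i, (confine G (B i)).Reachable a b)
    (htri : ∀ i ∈ I, IsTrifurcation G (B i) E) : I.card ≤ E.card := by
  obtain ⟨_, _⟩ := exists_wellFoundedLT V
  refine Finset.card_le_card_of_forall_subsingleton (fun i => IsApex G (B i) E)
    (fun i hi => ?_) fun v _ i hi j hj => ?_
  · obtain ⟨v, hv⟩ := (htri i hi).exists_isApex
    exact ⟨v, hv.1.1, hv⟩
  · by_contra hij
    exact not_isApex_of_isApex (hdisj hi.1 hj.1 hij) (hconn i hi.1) (hconn j hj.1) hi.2 hj.2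

end Trifurcation

section SquareLattice

/-- Edges of the square lattice: `(x, d)` joins `x` to `x + unitVec d`. -/
abbrev Edge : Type := (ℤ × ℤ) × Bool

/-- The horizontal (`false`) and vertical (`true`) unit vectors of `ℤ²`. -/
def unitVec (d : Bool) : ℤ × ℤ := if d then (0, 1) else (1, 0)

/-- The unordered pair of endpoints of an edge. -/
def ends (e : Edge) : Sym2 (ℤ × ℤ) := s(e.1, e.1 + unitVec e.2)

lemma unitVec_ne_zero (d : Bool) : unitVec d ≠ 0 := by
  cases d <;> simp [unitVec, Prod.ext_iff]

lemma ends_injective : Function.Injective ends := by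
  rintro ⟨⟨a, b⟩, d⟩ ⟨⟨a', b'⟩, d'⟩ h
  cases d <;> cases d' <;> simp [ends, unitVec, Prod.ext_iff] at h ⊢ <;> omega

/-- The graph formed by the open edges of a configuration on the square lattice. -/
def openGraph (ω : Edge → Bool) : SimpleGraph (ℤ × ℤ) where
  Adj u v := ∃ e, ω e = true ∧ ends e = s(u, v)
  symm := ⟨fun _ _ ⟨e, he, h⟩ => ⟨e, he, h.trans Sym2.eq_swap⟩⟩
  loopless := ⟨fun u ⟨e, _, h⟩ => unitVec_ne_zero e.2 (by
    obtain ⟨h₁, h₂⟩ | ⟨h₁, h₂⟩ := Sym2.eq_iff.1 h <;> exact left_eq_add.1 (h₁.trans h₂.symm))⟩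

/-- The square lattice, in which all edges are open. -/
def lattice : SimpleGraph (ℤ × ℤ) := openGraph fun _ => true

lemma ends_mem_edgeSet {ω : Edge → Bool} {e : Edge} :
    ends e ∈ (openGraph ω).edgeSet ↔ ω e = true :=
  ⟨fun ⟨_, he, h⟩ => ends_injective h ▸ he, fun he => ⟨e, he, rfl⟩⟩

lemma openGraph_mono : Monotone openGraph := fun _ _ h _ _ ⟨e, he, huv⟩ =>
  ⟨e, h e he, huv⟩

lemma openGraph_le_lattice (ω : Edge → Bool) : openGraph ω ≤ lattice :=
  openGraph_mono fun _ => Bool.le_true _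

lemma lattice_adj {u v : ℤ × ℤ} : lattice.Adj u v ↔
    u.2 = v.2 ∧ (v.1 = u.1 + 1 ∨ u.1 = v.1 + 1) ∨
      u.1 = v.1 ∧ (v.2 = u.2 + 1 ∨ u.2 = v.2 + 1) := by
  obtain ⟨a, b⟩ := u
  obtain ⟨c, d⟩ := v
  simp only [lattice, openGraph, ends, unitVec, Prod.exists, Bool.exists_bool, true_and,
    Bool.false_eq_true, if_false, if_true, Sym2.eq_iff, Prod.mk_add_mk, Prod.mk.injEq]
  constructor
  · rintro ⟨x, y, h⟩
    omega
  · rintro (⟨rfl, rfl | rfl⟩ | ⟨rfl, rfl | rfl⟩)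
    exacts [⟨a, b, by simp⟩, ⟨c, b, by simp⟩, ⟨a, b, by simp⟩, ⟨a, d, by simp⟩]

/-- The square of radius `r` around `(-s/2, -s/2)`; `s = 0` is used for sets of vertices and
`s = 1` for sets of faces, a face being labelled by its lower left corner. -/
def square (s r : ℤ) : Set (ℤ × ℤ) := Icc (-r - s, -r - s) (r, r)

variable {s r r' m n N : ℤ} {u v x y : ℤ × ℤ} {H : SimpleGraph (ℤ × ℤ)}

lemma mem_square : u ∈ square s r ↔ (-r - s ≤ u.1 ∧ u.1 ≤ r) ∧ -r - s ≤ u.2 ∧ u.2 ≤ r := by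
  simp only [square, mem_Icc, Prod.le_def]
  tauto

lemma finite_square : (square s r).Finite := finite_Icc _ _

lemma square_mono (h : r ≤ r') : square s r ⊆ square s r' := fun u hu => by
  simp only [mem_square] at *
  omega

lemma mem_square_succ_of_adj (hu : u ∈ square s r) (h : lattice.Adj u v) :
    v ∈ square s (r + 1) := by
  simp only [mem_square, lattice_adj] at *
  omega

lemma reachable_of_adj_succ {V : Type*} {G : SimpleGraph V} {f : ℤ → V} {p q : ℤ} (hpq : p ≤ q)
    (h : ∀ a, p ≤ a → a < q → G.Adj (f a) (f (a + 1))) : G.Reachable (f p) (f q) := by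
  induction q, hpq using Int.leInduction with
  | base => rfl
  | succ q hq ih =>
    exact (ih fun a ha haq => h a ha (by omega)).trans (h q hq (by omega)).reachable

lemma reachable_confine_square (hu : u ∈ square s r) (hv : v ∈ square s r) :
    (confine lattice (square s r)).Reachable u v := by
  have hcorner {x : ℤ × ℤ} (hx : x ∈ square s r) :
      (confine lattice (square s r)).Reachable (-r - s, -r - s) x := by
    rw [mem_square] at hx
    have hcol : (confine lattice (square s r)).Reachable (-r - s, -r - s) (-r - s, x.2) :=
      reachable_of_adj_succ (f := fun b => (-r - s, b)) hx.2.1 fun b _ _ => by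
        simp only [confine, lattice_adj, mem_square, true_and, true_or, or_true]
        omega
    have hrow : (confine lattice (square s r)).Reachable (-r - s, x.2) (x.1, x.2) :=
      reachable_of_adj_succ (f := fun a => (a, x.2)) hx.1.1 fun a _ _ => by
        simp only [confine, lattice_adj, mem_square, true_and, true_or]
        omega
    exact hcol.trans hrow
  exact (hcorner hu).symm.trans (hcorner hv)

/-- The edge of the square lattice crossed when passing between the two faces that are the
endpoints of `e`. -/
def dualEdge (e : Edge) : Edge := (e.1 + unitVec e.2, !e.2)

lemma dualEdge_injective : Function.Injective dualEdge := by
  rintro ⟨x, d⟩ ⟨y, d'⟩ h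
  obtain ⟨hxy, hd⟩ := Prod.ext_iff.1 h
  obtain rfl : d = d' := Bool.not_inj hd
  exact congrArg (·, d) (add_right_cancel hxy)

/-- The dual configuration, indexed by pairs of neighbouring faces. -/
def dual (ω : Edge → Bool) : Edge → Bool := fun e => !ω (dualEdge e)

/-- Two neighbouring faces are adjacent in `dualGraph H` if no edge of `H` separates them. -/
def dualGraph (H : SimpleGraph (ℤ × ℤ)) : SimpleGraph (ℤ × ℤ) where
  Adj x y := lattice.Adj x y ∧ ∀ e, ends e = s(x, y) → ends (dualEdge e) ∉ H.edgeSet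
  symm := ⟨fun _ _ h => ⟨h.1.symm, fun e he => h.2 e (he.trans Sym2.eq_swap)⟩⟩
  loopless := ⟨fun x h => lattice.loopless.irrefl x h.1⟩

lemma openGraph_dual_le {ω : Edge → Bool} (hH : H ≤ openGraph ω) :
    openGraph (dual ω) ≤ dualGraph H := fun x y hxy => by
  refine ⟨openGraph_le_lattice _ hxy, fun e he heH => ?_⟩
  have hopen := ends_mem_edgeSet.1 (SimpleGraph.edgeSet_mono hH heH)
  have hdual : dual ω e = true := ends_mem_edgeSet.1 (he ▸ hxy)
  simp [dual, hopen] at hdual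

/-- The intersection number of the edge shared by the faces `(a, b)` and `(a + 1, b)` with the
vertical ray going up from `u`. -/
def rayCrossing (u : ℤ × ℤ) (a b : ℤ) : ℤ := if u.1 = a + 1 ∧ u.2 ≤ b then 1 else 0

/-- The indicator that `u` lies to the left of the faces in column `a`. -/
def leftOf (u : ℤ × ℤ) (a : ℤ) : ℤ := if u.1 ≤ a then 1 else 0

/-- `f` is the winding number, as a function of the faces, of a curve in `H` from `u` to `v`
completed to infinity by the vertical rays going up from `u` and `v`; all edges of `H` lie in
the square of radius `N`. Away from the square, the winding number is explicit. -/
structure IsWinding (H : SimpleGraph (ℤ × ℤ)) (N : ℤ) (u v : ℤ × ℤ) (f : ℤ × ℤ → ℤ) : Prop where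
  vertical a b : ¬H.Adj (a, b + 1) (a + 1, b + 1) → f (a, b + 1) = f (a, b)
  horizontal a b : ¬H.Adj (a + 1, b) (a + 1, b + 1) →
    f (a + 1, b) = f (a, b) + (rayCrossing u a b - rayCrossing v a b)
  top a b : N ≤ b → f (a, b) = leftOf u a - leftOf v a
  bottom a b : b < -N → f (a, b) = 0
  left a b : a < -N → f (a, b) = 0

namespace IsWinding

variable {w : ℤ × ℤ} {f g : ℤ × ℤ → ℤ}

protected lemma refl (H : SimpleGraph (ℤ × ℤ)) (N : ℤ) (u : ℤ × ℤ) : IsWinding H N u u 0 := by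
  constructor <;> simp

protected lemma symm (hf : IsWinding H N u v f) : IsWinding H N v u (-f) where
  vertical a b h := by simp [hf.vertical a b h]
  horizontal a b h := by
    simp only [Pi.neg_apply, hf.horizontal a b h]
    ring
  top a b h := by simp [hf.top a b h]
  bottom a b h := by simp [hf.bottom a b h]
  left a b h := by simp [hf.left a b h]

protected lemma trans (hf : IsWinding H N u v f) (hg : IsWinding H N v w g) :
    IsWinding H N u w (f + g) where
  vertical a b h := by simp [hf.vertical a b h, hg.vertical a b h]
  horizontal a b h := by
    simp only [Pi.add_apply, hf.horizontal a b h, hg.horizontal a b h]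
    ring
  top a b h := by simp [hf.top a b h, hg.top a b h]
  bottom a b h := by simp [hf.bottom a b h, hg.bottom a b h]
  left a b h := by simp [hf.left a b h, hg.left a b h]

lemma of_adj_right {a b : ℤ} (hab : H.Adj (a, b) (a + 1, b))
    (ha : -N ≤ a) (hb : -N ≤ b) (hbN : b ≤ N) :
    IsWinding H N (a, b) (a + 1, b) fun x => if x.1 = a ∧ b ≤ x.2 then 1 else 0 where
  vertical c d h := by
    have : ¬(c = a ∧ d + 1 = b) := by
      rintro ⟨rfl, rfl⟩
      exact h hab
    simp only
    split_ifs <;> omega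
  horizontal c d _ := by
    simp only [rayCrossing]
    split_ifs <;> omega
  top c d h := by
    simp only [leftOf]
    split_ifs <;> omega
  bottom c d h := if_neg (by omega)
  left c d h := if_neg (by omega)

lemma of_adj_up {a b : ℤ} (hab : H.Adj (a, b) (a, b + 1)) :
    IsWinding H N (a, b) (a, b + 1) 0 where
  vertical _ _ _ := rfl
  horizontal c d h := by
    have : ¬(a = c + 1 ∧ b = d) := by
      rintro ⟨rfl, rfl⟩
      exact h hab
    simp only [rayCrossing, Pi.zero_apply]
    split_ifs <;> omega
  top c d _ := by simp [leftOf]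
  bottom _ _ _ := rfl
  left _ _ _ := rfl

end IsWinding

lemma exists_isWinding_of_adj (hH : H ≤ confine lattice (square 0 N)) (h : H.Adj u v) :
    ∃ f, IsWinding H N u v f := by
  have hu := mem_square.1 (hH h).2.1
  have hv := mem_square.1 (hH h).2.2
  obtain ⟨a, b⟩ := u
  obtain ⟨c, d⟩ := v
  obtain ⟨rfl, rfl | rfl⟩ | ⟨rfl, rfl | rfl⟩ : b = d ∧ (c = a + 1 ∨ a = c + 1) ∨
      a = c ∧ (d = b + 1 ∨ b = d + 1) := lattice_adj.1 (hH h).1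
  · exact ⟨_, .of_adj_right h (by omega) (by omega) hu.2.2⟩
  · exact ⟨_, (IsWinding.of_adj_right h.symm (by omega) (by omega) hv.2.2).symm⟩
  · exact ⟨_, .of_adj_up h⟩
  · exact ⟨_, (IsWinding.of_adj_up h.symm).symm⟩

theorem exists_isWinding (hH : H ≤ confine lattice (square 0 N)) (h : H.Reachable u v) :
    ∃ f, IsWinding H N u v f := by
  obtain ⟨p⟩ := h
  induction p with
  | nil => exact ⟨0, .refl H N _⟩
  | cons h _ ih =>
    obtain ⟨f, hf⟩ := exists_isWinding_of_adj hH h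
    obtain ⟨g, hg⟩ := ih
    exact ⟨f + g, hf.trans hg⟩

end SquareLattice

section Arms

variable {V : Type*} {G H : SimpleGraph V} {B S T : Set V}

/-- An arm: a path of `G` inside `S` that starts in `B`, followed by an edge of `G` from `S`
into `T`. -/
def HasArm (G : SimpleGraph V) (B S T : Set V) : Prop :=
  ∃ w ∈ S, Hits (confine G S) B w ∧ ∃ z ∈ T, G.Adj w z

lemma HasArm.of_adj_on (hGH : ∀ a ∈ S, ∀ b, G.Adj a b → H.Adj a b) (h : HasArm G B S T) :
    HasArm H B S T := by
  obtain ⟨w, hw, hwB, z, hz, hwz⟩ := h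
  have hle : confine G S ≤ confine H S := fun a b hab => ⟨hGH a hab.2.1 b hab.1, hab.2⟩
  exact ⟨w, hw, hwB.mono hle, z, hz, hGH w hw z hwz⟩

lemma HasArm.mono (hGH : G ≤ H) (h : HasArm G B S T) : HasArm H B S T :=
  h.of_adj_on fun _ _ _ hab => hGH hab

lemma hasArm_comap {W : Type*} {G : SimpleGraph W} {B S T : Set W} (φ : V ≃ W) :
    HasArm (G.comap φ) (φ ⁻¹' B) (φ ⁻¹' S) (φ ⁻¹' T) ↔ HasArm G B S T := by
  have hits (w : V) : Hits (confine (G.comap φ) (φ ⁻¹' S)) (φ ⁻¹' B) w ↔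
      Hits (confine G S) B (φ w) :=
    φ.exists_congr fun b => and_congr_right fun _ => reachable_comap_equiv φ (confine G S)
  exact φ.exists_congr fun w => and_congr_right fun _ => and_congr (hits w)
    (φ.exists_congr fun z => Iff.rfl)

lemma hasArm_compl_of_reachable {u v : V} (hBS : B ⊆ S) (hu : u ∈ B) (hv : v ∉ S)
    (h : G.Reachable u v) : HasArm G B S Sᶜ := by
  obtain ⟨w, hw, huw, z, hz, hwz⟩ :=
    exists_adj_of_reachable (B := Sᶜ) h (not_not_intro (hBS hu)) hv
  rw [compl_compl] at huw
  exact ⟨w, not_not.1 hw, ⟨u, hu, huw.symm⟩, z, hz, hwz⟩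

end Arms

section Separation

variable {m n a b : ℤ} {u v x y : ℤ × ℤ} {H : SimpleGraph (ℤ × ℤ)} {f : ℤ × ℤ → ℤ}

lemma not_adj_of_dualGraph_adj_right (h : (dualGraph H).Adj (a, b) (a + 1, b)) :
    ¬H.Adj (a + 1, b) (a + 1, b + 1) := by
  simpa [ends, dualEdge, unitVec] using h.2 ((a, b), false) (by simp [ends, unitVec])

lemma not_adj_of_dualGraph_adj_up (h : (dualGraph H).Adj (a, b) (a, b + 1)) :
    ¬H.Adj (a, b + 1) (a + 1, b + 1) := by
  simpa [ends, dualEdge, unitVec] using h.2 ((a, b), true) (by simp [ends, unitVec])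

lemma confine_square_le_dualGraph (hH : H ≤ confine lattice (square 0 m)ᶜ) :
    confine lattice (square 1 m) ≤ dualGraph H := by
  rintro x y ⟨hxy, hx, hy⟩
  refine ⟨hxy, fun ⟨⟨a, b⟩, d⟩ he heH => ?_⟩
  have hmem (z) (hz : z ∈ ends ((a, b), d)) : z ∈ square 1 m := by
    rw [he, Sym2.mem_iff] at hz
    rcases hz with rfl | rfl <;> assumption
  have hface := mem_square.1 (hmem _ (Sym2.mem_mk_left _ _))
  have hface' := mem_square.1 (hmem _ (Sym2.mem_mk_right _ _))
  have hoff := (hH heH).2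
  simp only [mem_compl_iff, mem_square] at hoff
  cases d <;> simp [unitVec, dualEdge] at hface hface' hoff <;> omega

/-- The vertical ray going up from `u` avoids the square of radius `n`. -/
def RayAvoids (n : ℤ) (u : ℤ × ℤ) : Prop := n < u.2 ∨ n < u.1 ∨ u.1 < -n

namespace IsWinding

lemma eq_of_adj (hf : IsWinding H (n + 1) u v f) (hu : RayAvoids n u) (hv : RayAvoids n v)
    (hxy : (confine (dualGraph H) (square 1 n)).Adj x y) : f x = f y := by
  obtain ⟨hxy, hx, hy⟩ := hxy
  obtain ⟨a, b⟩ := x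
  obtain ⟨c, d⟩ := y
  simp only [mem_square, RayAvoids] at hx hy hu hv
  have hright {c d : ℤ} (hc : -n - 1 ≤ c) (hcn : c + 1 ≤ n) (hd : d ≤ n)
      (h : (dualGraph H).Adj (c, d) (c + 1, d)) : f (c + 1, d) = f (c, d) := by
    have hjump := hf.horizontal c d (not_adj_of_dualGraph_adj_right h)
    simp only [rayCrossing] at hjump
    split_ifs at hjump <;> omega
  obtain ⟨rfl, rfl | rfl⟩ | ⟨rfl, rfl | rfl⟩ : b = d ∧ (c = a + 1 ∨ a = c + 1) ∨
      a = c ∧ (d = b + 1 ∨ b = d + 1) := lattice_adj.1 hxy.1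
  · exact (hright (by omega) (by omega) (by omega) hxy).symm
  · exact hright (by omega) (by omega) (by omega) hxy.symm
  · exact (hf.vertical _ _ (not_adj_of_dualGraph_adj_up hxy)).symm
  · exact hf.vertical _ _ (not_adj_of_dualGraph_adj_up hxy.symm)

lemma eq_of_reachable (hf : IsWinding H (n + 1) u v f) (hu : RayAvoids n u) (hv : RayAvoids n v)
    (hxy : (confine (dualGraph H) (square 1 n)).Reachable x y) : f x = f y := by
  obtain ⟨p⟩ := hxy
  induction p with
  | nil => rfl
  | cons h _ ih => exact (hf.eq_of_adj hu hv h).trans ih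

lemma exists_eq_of_hasArm {T : Set (ℤ × ℤ)} (hf : IsWinding H (n + 1) u v f)
    (hu : RayAvoids n u) (hv : RayAvoids n v) (hmn : m ≤ n)
    (hH : H ≤ confine lattice (square 0 m)ᶜ) (hx : x ∈ square 1 m)
    (hT : HasArm (dualGraph H) (square 1 m) (square 1 n) T) :
    ∃ w ∈ square 1 n, f w = f x ∧ ∃ z ∈ T, (dualGraph H).Adj w z := by
  obtain ⟨w, hw, ⟨y, hy, hwy⟩, hz⟩ := hT
  have hle : confine lattice (square 1 m) ≤ confine (dualGraph H) (square 1 n) :=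
    fun c d h => ⟨confine_square_le_dualGraph hH h, square_mono hmn h.2.1, square_mono hmn h.2.2⟩
  exact ⟨w, hw, hf.eq_of_reachable hu hv
    (hwy.trans ((reachable_confine_square hy hx).mono hle)), hz⟩

end IsWinding

/-- The bottom arm shows that the winding number vanishes on the inner square; the other two arms
then carry the value `0` to the places where they leave the outer square, where the winding
number is explicit. -/
theorem exists_leftOf_eq_and_exists_rayCrossing_eq (hm : 0 ≤ m) (hmn : m ≤ n)
    (hH : H ≤ confine lattice (square 0 (n + 1))) (hHm : H ≤ confine lattice (square 0 m)ᶜ)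
    (hu : RayAvoids n u) (hv : RayAvoids n v) (huv : H.Reachable u v)
    (hT : HasArm (dualGraph H) (square 1 m) (square 1 n) {z | z.2 = n + 1 ∧ 0 ≤ z.1})
    (hL : HasArm (dualGraph H) (square 1 m) (square 1 n) {z | z.1 = -n - 2 ∧ 0 ≤ z.2})
    (hB : HasArm (dualGraph H) (square 1 m) (square 1 n) {z | z.2 = -n - 2 ∧ z.1 ≤ -1}) :
    (∃ a, 0 ≤ a ∧ a ≤ n ∧ leftOf u a = leftOf v a) ∧
      ∃ b, 0 ≤ b ∧ b ≤ n ∧ rayCrossing u (-n - 2) b = rayCrossing v (-n - 2) b := by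
  obtain ⟨f, hf⟩ := exists_isWinding hH huv
  have h0 : (0 : ℤ × ℤ) ∈ square 1 m := by
    simp only [mem_square, Prod.fst_zero, Prod.snd_zero]
    omega
  have harm {T} := hf.exists_eq_of_hasArm (T := T) hu hv hmn hHm h0
  have hzero : f 0 = 0 := by
    obtain ⟨⟨a, b⟩, hw, hf0, ⟨a', b'⟩, hz, hwz⟩ := harm hB
    have hadj := lattice_adj.1 hwz.1
    simp only [mem_square, mem_ofPred_eq] at hw hz hadj
    obtain ⟨rfl, rfl⟩ : a = a' ∧ b = b' + 1 := by omega
    rw [← hf0, hf.vertical a b' (not_adj_of_dualGraph_adj_up hwz.symm),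
      hf.bottom a b' (by omega)]
  constructor
  · obtain ⟨⟨a, b⟩, hw, hf0, ⟨a', b'⟩, hz, hwz⟩ := harm hT
    have hadj := lattice_adj.1 hwz.1
    simp only [mem_square, mem_ofPred_eq] at hw hz hadj
    obtain ⟨rfl, rfl⟩ : a = a' ∧ b' = b + 1 := by omega
    have hvert := hf.vertical a b (not_adj_of_dualGraph_adj_up hwz)
    have htop := hf.top a (b + 1) (by omega)
    exact ⟨a, by omega, by omega, by omega⟩
  · obtain ⟨⟨a, b⟩, hw, hf0, ⟨a', b'⟩, hz, hwz⟩ := harm hL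
    have hadj := lattice_adj.1 hwz.1
    simp only [mem_square, mem_ofPred_eq] at hw hz hadj
    obtain ⟨rfl, rfl, rfl⟩ : a' = -n - 2 ∧ a = -n - 2 + 1 ∧ b = b' := by omega
    have hhor := hf.horizontal (-n - 2) b (not_adj_of_dualGraph_adj_right hwz.symm)
    have hleft := hf.left (-n - 2) b (by omega)
    exact ⟨b, by omega, by omega, by omega⟩

end Separation

section Octants

variable {s r : ℤ} {m n : ℕ} {u v z : ℤ × ℤ} {t : Bool × Bool × Bool}

/-- The eight symmetries of `square s r`: an optional transposition followed by optional
reflections of the two coordinates. -/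
def boxSymm (s : ℤ) (t : Bool × Bool × Bool) : ℤ × ℤ ≃ ℤ × ℤ :=
  (if t.1 then Equiv.prodComm ℤ ℤ else .refl _).trans
    (.prodCongr (if t.2.1 then Equiv.subLeft (-s) else .refl ℤ)
      (if t.2.2 then Equiv.subLeft (-s) else .refl ℤ))

lemma preimage_boxSymm_square : boxSymm s t ⁻¹' square s r = square s r := by
  obtain ⟨_ | _, _ | _, _ | _⟩ := t <;> ext ⟨a, b⟩ <;> simp [boxSymm, mem_square] <;> omega

lemma lattice_adj_boxSymm :
    lattice.Adj (boxSymm s t u) (boxSymm s t v) ↔ lattice.Adj u v := by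
  obtain ⟨_ | _, _ | _, _ | _⟩ := t <;> simp [boxSymm, lattice_adj] <;> omega

/-- The eight pieces of the outer boundary of `square s n`: the piece `(false, false, false)` is
the upper half of the right side, and the symmetries of the square give the others. -/
def octant (s r : ℤ) (t : Bool × Bool × Bool) : Set (ℤ × ℤ) :=
  boxSymm s t ⁻¹' {z | z.1 = r + 1 ∧ 0 ≤ z.2}

lemma exists_mem_octant (hs : s = 0 ∨ s = 1) (hz : z ∈ square s (r + 1)) (hzr : z ∉ square s r) :
    ∃ t, z ∈ octant s r t := by
  simp only [octant, boxSymm, mem_square, Prod.exists, Bool.exists_bool] at *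
  simp
  omega

/-- The octants in which the three branches of a trifurcation leave the square. -/
def branchOctant : Fin 3 → Bool × Bool × Bool :=
  ![(false, false, false), (true, false, true), (false, true, true)]

lemma rayAvoids_of_mem_octant (i : Fin 3) (hz : z ∈ octant 0 r (branchOctant i)) :
    RayAvoids r z := by
  fin_cases i <;> simp [branchOctant, octant, boxSymm] at hz <;> simp only [RayAvoids] <;> omega

lemma leftOf_of_mem_octant {a : ℤ} (i : Fin 3) (hz : z ∈ octant 0 r (branchOctant i))
    (ha : 0 ≤ a) (har : a ≤ r) : leftOf z a = ![0, 1, 1] i := by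
  fin_cases i <;> simp [branchOctant, octant, boxSymm] at hz <;> simp [leftOf] <;> omega

lemma rayCrossing_of_mem_octant {b : ℤ} (i : Fin 3) (hz : z ∈ octant 0 r (branchOctant i))
    (hb : 0 ≤ b) (hbr : b ≤ r) : rayCrossing z (-r - 2) b = ![0, 0, 1] i := by
  fin_cases i <;> simp [branchOctant, octant, boxSymm] at hz <;> simp [rayCrossing] <;> omega

lemma not_reachable_of_dual_hasArm (hmn : m ≤ n) {H : SimpleGraph (ℤ × ℤ)}
    (hH : H ≤ confine lattice (square 0 (n + 1))) (hHm : H ≤ confine lattice (square 0 m)ᶜ)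
    (harm : ∀ t, HasArm (dualGraph H) (square 1 m) (square 1 n) (octant 1 n t))
    {i j : Fin 3} (hij : i ≠ j) (hu : u ∈ octant 0 n (branchOctant i))
    (hv : v ∈ octant 0 n (branchOctant j)) : ¬H.Reachable u v := fun huv => by
  have top : octant 1 n (true, false, false) = {z | z.2 = (n : ℤ) + 1 ∧ 0 ≤ z.1} := rfl
  have left : octant 1 n (false, true, false) = {z | z.1 = -(n : ℤ) - 2 ∧ 0 ≤ z.2} := by
    ext; simp [octant, boxSymm]; omega
  have bottom : octant 1 n (true, true, true) = {z | z.2 = -(n : ℤ) - 2 ∧ z.1 ≤ -1} := by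
    ext; simp [octant, boxSymm]; omega
  obtain ⟨⟨a, ha, han, hleft⟩, b, hb, hbn, hcross⟩ :=
    exists_leftOf_eq_and_exists_rayCrossing_eq (m := m) (n := n) (by omega) (by omega) hH hHm
      (rayAvoids_of_mem_octant i hu) (rayAvoids_of_mem_octant j hv) huv
      (top ▸ harm _) (left ▸ harm _) (bottom ▸ harm _)
  rw [leftOf_of_mem_octant i hu ha han, leftOf_of_mem_octant j hv ha han] at hleft
  rw [rayCrossing_of_mem_octant i hu hb hbn, rayCrossing_of_mem_octant j hv hb hbn] at hcross
  clear * - hij hleft hcross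
  revert i j
  decide

theorem isTrifurcation_of_hasArm {ω : Edge → Bool} (hmn : m < n)
    (hprimal : ∀ t, HasArm (openGraph ω) (square 0 m) (square 0 n) (octant 0 n t))
    (hdual : ∀ t, HasArm (openGraph (dual ω)) (square 1 m) (square 1 n) (octant 1 n t)) :
    IsTrifurcation (confine (openGraph ω) (square 0 n)) (square 0 m)
      (Finset.box n : Finset (ℤ × ℤ)) := by
  choose w hw hwm z hz hwz using fun i => hprimal (branchOctant i)
  have hlat (i : Fin 3) := lattice_adj.1 (openGraph_le_lattice ω (hwz i))
  have hzn (i : Fin 3) : z i ∉ square 0 n := by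
    have := rayAvoids_of_mem_octant i (hz i)
    simp only [RayAvoids, mem_square] at *
    omega
  have hwbox (i : Fin 3) : w i ∈ (Finset.box n : Finset (ℤ × ℤ)) := by
    have := hw i
    have := hzn i
    have := hlat i
    simp only [mem_square, Int.mem_box] at *
    omega
  have hwm' (i : Fin 3) : w i ∉ square 0 m := by
    have := hwbox i
    simp only [mem_square, Int.mem_box] at *
    omega
  let H := confine (confine (openGraph ω) (square 0 (n + 1))) (square 0 m)ᶜ
  have hle : confine (confine (openGraph ω) (square 0 n)) (square 0 m)ᶜ ≤ H :=
    confine_mono (confine_mono le_rfl (square_mono (by omega))) le_rfl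
  have hHω : H ≤ openGraph ω := confine_le.trans confine_le
  have hwzH (i : Fin 3) : H.Adj (w i) (z i) :=
    ⟨⟨hwz i, square_mono (by omega) (hw i),
      mem_square_succ_of_adj (hw i) (openGraph_le_lattice ω (hwz i))⟩,
      hwm' i, fun h => hzn i (square_mono (by omega) h)⟩
  refine ⟨w, fun i => ⟨hwbox i, hwm i⟩, fun i j hij hr => ?_⟩
  refine not_reachable_of_dual_hasArm hmn.le
    (confine_le.trans (confine_mono (openGraph_le_lattice ω) le_rfl))
    (confine_mono (confine_le.trans (openGraph_le_lattice ω)) le_rfl)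
    (fun t => (hdual t).mono (openGraph_dual_le hHω)) hij (hz i) (hz j) ?_
  exact (hwzH i).symm.reachable.trans ((hr.mono hle).trans (hwzH j).reachable)

end Octants

section LocalEvents

variable {ω ω' : Edge → Bool} {S B T : Set (ℤ × ℤ)} {s r : ℤ} {a b u v : ℤ × ℤ}

lemma openGraph_adj_congr (h : ∀ e, ends e = s(a, b) → ω e = ω' e) :
    (openGraph ω).Adj a b ↔ (openGraph ω').Adj a b :=
  exists_congr fun e => and_congr_left fun he => by rw [h e he]

/-- The edges with both endpoints in `S`. -/
def edgesIn (S : Set (ℤ × ℤ)) : Set Edge := {e | ∀ v ∈ ends e, v ∈ S}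

lemma finite_edgesIn (hS : S.Finite) : (edgesIn S).Finite :=
  (hS.prod (toFinite univ)).subset fun _ he => ⟨he _ (Sym2.mem_mk_left _ _), trivial⟩

lemma confine_openGraph_congr (h : ∀ e ∈ edgesIn S, ω e = ω' e) :
    confine (openGraph ω) S = confine (openGraph ω') S := by
  ext a b
  refine and_congr_left fun hab => openGraph_adj_congr fun e he => h e fun v hv => ?_
  rw [he, Sym2.mem_iff] at hv
  rcases hv with rfl | rfl
  exacts [hab.1, hab.2]

lemma openGraph_adj_congr_off (h : ∀ e ∈ (edgesIn B)ᶜ, ω e = ω' e) :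
    ∀ a ∉ B, ∀ b, (openGraph ω).Adj a b ↔ (openGraph ω').Adj a b := fun a ha b =>
  openGraph_adj_congr fun e he => h e fun heB => ha (heB a (he ▸ Sym2.mem_mk_left a b))

lemma dependsOn_confine_openGraph (p : SimpleGraph (ℤ × ℤ) → Prop) :
    DependsOn (· ∈ {ω | p (confine (openGraph ω) S)}) (edgesIn S) := fun ω ω' h => by
  simp only [mem_ofPred_eq, confine_openGraph_congr h]

lemma hasArm_confine_square :
    HasArm (confine (openGraph ω) (square s (r + 1))) B (square s r) T ↔
      HasArm (openGraph ω) B (square s r) T :=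
  ⟨.mono confine_le, .of_adj_on fun _ ha _ hab => ⟨hab, square_mono (by omega) ha,
    mem_square_succ_of_adj ha (openGraph_le_lattice ω hab)⟩⟩

/-- The event that there is an open arm from `B` through `square s r` to `T`. -/
def armEvent (s r : ℤ) (B T : Set (ℤ × ℤ)) : Set (Edge → Bool) :=
  {ω | HasArm (openGraph ω) B (square s r) T}

lemma dependsOn_armEvent :
    DependsOn (· ∈ armEvent s r B T) (edgesIn (square s (r + 1))) := by
  simpa only [armEvent, ← hasArm_confine_square (r := r)] using
    dependsOn_confine_openGraph fun G => HasArm G B (square s r) T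

lemma measurableSet_armEvent : MeasurableSet (armEvent s r B T) :=
  measurableSet_of_dependsOn (finite_edgesIn finite_square) dependsOn_armEvent

lemma isUpperSet_armEvent : IsUpperSet (armEvent s r B T) :=
  fun _ _ h => HasArm.mono (openGraph_mono h)

/-- The open cluster of `u`. -/
def openCluster (ω : Edge → Bool) (u : ℤ × ℤ) : Set (ℤ × ℤ) := {v | (openGraph ω).Reachable u v}

lemma openCluster_mono (u : ℤ × ℤ) : Monotone fun ω => openCluster ω u :=
  fun _ _ h _ hv => hv.mono (openGraph_mono h)

/-- The event that some vertex of `B` lies in an infinite open cluster. -/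
def percolatesFrom (B : Set (ℤ × ℤ)) : Set (Edge → Bool) :=
  {ω | ∃ u ∈ B, (openCluster ω u).Infinite}

lemma isUpperSet_percolatesFrom (B : Set (ℤ × ℤ)) : IsUpperSet (percolatesFrom B) :=
  fun _ _ hle ⟨u, hu, hinf⟩ => ⟨u, hu, hinf.mono (openCluster_mono u hle)⟩

lemma percolatesFrom_mono : Monotone percolatesFrom :=
  fun _ _ hBT _ ⟨u, hu, h⟩ => ⟨u, hBT hu, h⟩

lemma measurableSet_mem_openCluster (u v : ℤ × ℤ) : MeasurableSet {ω | v ∈ openCluster ω u} := by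
  have hunion : {ω | v ∈ openCluster ω u} =
      ⋃ S : Finset (ℤ × ℤ), {ω | (confine (openGraph ω) S).Reachable u v} := by
    ext ω
    simp only [mem_iUnion]
    exact ⟨exists_finset_reachable_confine, fun ⟨_, h⟩ => h.mono confine_le⟩
  rw [hunion]
  exact .iUnion fun S => measurableSet_of_dependsOn (finite_edgesIn S.finite_toSet)
    (dependsOn_confine_openGraph fun G => G.Reachable u v)

lemma measurableSet_percolatesFrom (B : Set (ℤ × ℤ)) : MeasurableSet (percolatesFrom B) := by
  have hinter : percolatesFrom B =
      ⋃ u ∈ B, ⋂ F : Finset (ℤ × ℤ), ⋃ v ∈ (F : Set (ℤ × ℤ))ᶜ, {ω | v ∈ openCluster ω u} := by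
    ext ω
    simp only [percolatesFrom, mem_iUnion, mem_iInter, exists_prop]
    refine exists_congr fun u => and_congr_right fun _ => ⟨fun h F => ?_, fun h hfin => ?_⟩
    · obtain ⟨v, hv, hvF⟩ := h.exists_notMem_finset F
      exact ⟨v, hvF, hv⟩
    · obtain ⟨v, hvF, hv⟩ := h hfin.toFinset
      exact hvF (by simpa using hv)
  rw [hinter]
  exact .biUnion B.to_countable fun u _ => .iInter fun F => .biUnion (to_countable _) fun v _ =>
    measurableSet_mem_openCluster u v

lemma percolatesFrom_univ_of_eqOn_compl {F : Set Edge} (hF : F.Finite)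
    (h : ∀ e ∈ Fᶜ, ω e = ω' e) (hω : ω ∈ percolatesFrom univ) : ω' ∈ percolatesFrom univ := by
  obtain ⟨u, -, hu⟩ := hω
  let B := insert u (Prod.fst '' F ∪ (fun e => e.1 + unitVec e.2) '' F)
  have hB : B.Finite := ((hF.image _).union (hF.image _)).insert u
  have hFB : F ⊆ edgesIn B := fun e he v hv => by
    rcases Sym2.mem_iff.1 hv with rfl | rfl
    exacts [.inr (.inl ⟨e, he, rfl⟩), .inr (.inr ⟨e, he, rfl⟩)]
  have hcover : openCluster ω u ⊆ ⋃ b ∈ B, openCluster ω' b := fun v hv => by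
    have hits : Hits (openGraph ω) B v := ⟨u, mem_insert _ _, hv.symm⟩
    obtain ⟨b, hb, hvb⟩ := hits.of_adj_off fun a ha b =>
      (openGraph_adj_congr_off (fun e he => h e fun heF => he (hFB heF)) a ha b).1
    exact mem_biUnion hb hvb.symm
  by_contra hfin
  refine hu (.subset (hB.biUnion fun b _ => ?_) hcover)
  by_contra hb
  exact hfin ⟨b, trivial, hb⟩

lemma dependsOn_percolatesFrom_univ {F : Set Edge} (hF : F.Finite) :
    DependsOn (· ∈ percolatesFrom univ) Fᶜ := fun _ _ h =>
  propext ⟨percolatesFrom_univ_of_eqOn_compl hF h,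
    percolatesFrom_univ_of_eqOn_compl hF fun e he => (h e he).symm⟩

lemma percolatesFrom_square_subset_iUnion_armEvent {m n : ℤ} (hmn : m ≤ n)
    (hs : s = 0 ∨ s = 1) : percolatesFrom (square s m) ⊆
      ⋃ t ∈ Finset.univ, armEvent s n (square s m) (octant s n t) := fun ω ⟨u, hu, hinf⟩ => by
  obtain ⟨v, huv, hv⟩ := hinf.exists_notMem_finite finite_square
  obtain ⟨w, hw, hwB, z, hz, hwz⟩ :=
    hasArm_compl_of_reachable (square_mono hmn) hu hv huv
  obtain ⟨t, ht⟩ :=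
    exists_mem_octant hs (mem_square_succ_of_adj hw (openGraph_le_lattice ω hwz)) hz
  exact mem_biUnion (Finset.mem_univ t) ⟨w, hw, hwB, z, ht, hwz⟩

end LocalEvents

section FairPercolation

open ProbabilityTheory (uniformOn)

/-- Bond percolation on the square lattice with parameter `1 / 2`. -/
noncomputable def fair : Measure (Edge → Bool) := Measure.infinitePi fun _ => uniformOn univ

instance : IsProbabilityMeasure fair := by
  unfold fair
  infer_instance

variable {m n : ℕ} {s r : ℤ} {B T : Set (ℤ × ℤ)}

lemma measurePreserving_comp {f : Edge → Edge} (hf : Function.Injective f) :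
    MeasurePreserving (fun ω : Edge → Bool => ω ∘ f) fair fair where
  measurable := by fun_prop
  map_eq := Measure.map_infinitePi_infinitePi_of_inj hf

lemma map_not_uniformOn_univ :
    (uniformOn (univ : Set Bool)).map (fun b => !b) = uniformOn univ := by
  have := Measure.isProbabilityMeasure_map (μ := uniformOn (univ : Set Bool))
    (f := fun b => !b) .of_discrete
  refine measure_eq_of_singleton_le fun b => ?_
  have hpre : (fun b => !b) ⁻¹' {b} = {!b} := by
    ext c
    simp [Bool.not_eq_eq_eq_not]
  rw [Measure.map_apply .of_discrete (measurableSet_singleton b), hpre,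
    uniformOn_univ_singleton, uniformOn_univ_singleton]

lemma measurePreserving_dual : MeasurePreserving dual fair fair := by
  have hnot : MeasurePreserving (fun (ω : Edge → Bool) e => !ω e) fair fair :=
    ⟨by fun_prop, by
      rw [fair, Measure.infinitePi_map_pi _ fun _ => .of_discrete, map_not_uniformOn_univ]⟩
  exact hnot.comp (measurePreserving_comp dualEdge_injective)

lemma exists_measurePreserving_openGraph_comap {σ : ℤ × ℤ ≃ ℤ × ℤ}
    (hσ : ∀ u v, lattice.Adj (σ u) (σ v) ↔ lattice.Adj u v) :
    ∃ g, MeasurePreserving g fair fair ∧ ∀ ω, openGraph (g ω) = (openGraph ω).comap σ := by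
  have hmap (e : Edge) : ∃ e', ends e' = (ends e).map σ := by
    obtain ⟨e', -, he'⟩ : lattice.Adj (σ e.1) (σ (e.1 + unitVec e.2)) :=
      (hσ _ _).2 ⟨e, rfl, rfl⟩
    exact ⟨e', he'⟩
  choose f hf using hmap
  have hinj : Function.Injective f := fun e e' h => ends_injective <|
    Sym2.map.injective σ.injective (by rw [← hf, ← hf, h])
  refine ⟨fun ω => ω ∘ f, measurePreserving_comp hinj, fun ω => ?_⟩
  ext u v
  constructor
  · rintro ⟨e, he, huv⟩
    exact ⟨f e, he, by rw [hf, huv, Sym2.map_mk]⟩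
  · rintro ⟨e', he', huv⟩
    obtain ⟨e, -, he⟩ := (hσ u v).1 (openGraph_le_lattice ω ⟨e', he', huv⟩)
    have hfe : f e = e' := ends_injective (by rw [hf, he, huv, Sym2.map_mk])
    exact ⟨e, by rwa [← hfe] at he', he⟩

lemma fair_armEvent_octant_eq (t t' : Bool × Bool × Bool) :
    fair (armEvent s n (square s m) (octant s n t)) =
      fair (armEvent s n (square s m) (octant s n t')) := by
  have hright (t) : fair (armEvent s n (square s m) (octant s n t)) =
      fair (armEvent s n (square s m) {z | z.1 = n + 1 ∧ 0 ≤ z.2}) := by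
    obtain ⟨g, hg, hgω⟩ := exists_measurePreserving_openGraph_comap
      fun u v => lattice_adj_boxSymm (s := s) (t := t)
    rw [← hg.measure_preimage measurableSet_armEvent.nullMeasurableSet]
    congr 1
    ext ω
    have := hasArm_comap (G := openGraph ω) (B := square s m) (S := square s n)
      (T := {z | z.1 = n + 1 ∧ 0 ≤ z.2}) (boxSymm s t)
    rw [preimage_boxSymm_square, preimage_boxSymm_square, ← hgω] at this
    exact this
  rw [hright, hright]

lemma one_sub_fair_real_armEvent_pow_le (hmn : m ≤ n) (hs : s = 0 ∨ s = 1)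
    (t : Bool × Bool × Bool) :
    (1 - fair.real (armEvent s n (square s m) (octant s n t))) ^ 8 ≤
      1 - fair.real (percolatesFrom (square s m)) := by
  have hmn' : (m : ℤ) ≤ n := by exact_mod_cast hmn
  have hfin := finite_edgesIn (finite_square (s := s) (r := n + 1))
  have hprod := prod_one_sub_le_one_sub_iUnion (fun _ => uniformOn univ) Finset.univ
    (fun t => isUpperSet_armEvent (s := s) (r := n) (B := square s m) (T := octant s n t))
    (F := hfin.toFinset) fun t => by simpa only [hfin.coe_toFinset] using dependsOn_armEvent
  have hconst (t') : (1 : ℝ) - fair.real (armEvent s n (square s m) (octant s n t')) =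
      1 - fair.real (armEvent s n (square s m) (octant s n t)) := by
    rw [Measure.real, Measure.real, fair_armEvent_octant_eq t' t]
  calc (1 - fair.real (armEvent s n (square s m) (octant s n t))) ^ 8
      = ∏ t', (1 - fair.real (armEvent s n (square s m) (octant s n t'))) := by
        rw [Finset.prod_congr rfl fun t' _ => hconst t', Finset.prod_const]
        rfl
    _ ≤ 1 - fair.real (⋃ t' ∈ Finset.univ, armEvent s n (square s m) (octant s n t')) := hprod
    _ ≤ 1 - fair.real (percolatesFrom (square s m)) :=
        sub_le_sub_left (measureReal_mono
          (percolatesFrom_square_subset_iUnion_armEvent hmn' hs) (measure_ne_top _ _)) 1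

lemma fair_percolatesFrom_univ (h : fair (percolatesFrom {0}) ≠ 0) :
    fair (percolatesFrom univ) = 1 :=
  (infinitePi_zero_or_one_of_dependsOn_compl _ (measurableSet_percolatesFrom univ)
    fun _ => dependsOn_percolatesFrom_univ).resolve_left fun h0 =>
      h (measure_mono_null (percolatesFrom_mono (subset_univ _)) h0)

lemma exists_lt_fair_real_percolatesFrom_square (h : fair (percolatesFrom {0}) ≠ 0) {c : ℝ}
    (hc : c < 1) : ∃ m : ℕ, c < fair.real (percolatesFrom (square 0 m)) := by
  have hmono : Monotone fun m : ℕ => percolatesFrom (square 0 m) :=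
    percolatesFrom_mono.comp fun _ _ h => square_mono (Int.ofNat_le.2 h)
  have hunion : ⋃ m : ℕ, percolatesFrom (square 0 m) = percolatesFrom univ := by
    refine (iUnion_subset fun _ => percolatesFrom_mono (subset_univ _)).antisymm ?_
    rintro ω ⟨u, -, hu⟩
    refine mem_iUnion.2 ⟨max u.1.natAbs u.2.natAbs, u, ?_, hu⟩
    rw [mem_square]
    omega
  have htends := tendsto_measure_iUnion_atTop (μ := fair) hmono
  rw [hunion, fair_percolatesFrom_univ h] at htends
  exact (((ENNReal.tendsto_toReal ENNReal.one_ne_top).comp htends).eventually_const_lt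
    hc).exists

theorem exists_forall_fair_real_armEvent_ge (h : fair (percolatesFrom {0}) ≠ 0) {ε : ℝ}
    (hε : 0 < ε) : ∃ m : ℕ, ∀ n, m ≤ n → ∀ s : ℤ, s = 0 ∨ s = 1 → ∀ t,
      1 - ε ≤ fair.real (armEvent s n (square s m) (octant s n t)) := by
  obtain ⟨m, hm⟩ := exists_lt_fair_real_percolatesFrom_square h
    (c := 1 - ε ^ 8) (sub_lt_self _ (by positivity))
  refine ⟨m, fun n hmn s hs t => ?_⟩
  have hsq : square 0 m ⊆ square s m := fun u hu => by
    rw [mem_square] at *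
    omega
  have hmono : fair.real (percolatesFrom (square 0 m)) ≤ fair.real (percolatesFrom (square s m)) :=
    measureReal_mono (percolatesFrom_mono hsq)
  have hpow := one_sub_fair_real_armEvent_pow_le hmn hs t
  have := lt_of_pow_lt_pow_left₀ 8 hε.le (hpow.trans_lt (by linarith))
  linarith

end FairPercolation

section FairTrifurcation

open ProbabilityTheory (uniformOn)

variable {m n : ℕ} {S : Set (ℤ × ℤ)}

lemma fair_real_compl_isTrifurcation_le {ε : ℝ} (hmn : m < n)
    (h : ∀ s : ℤ, s = 0 ∨ s = 1 → ∀ t,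
      1 - ε ≤ fair.real (armEvent s n (square s m) (octant s n t))) :
    fair.real {ω | IsTrifurcation (confine (openGraph ω) (square 0 n)) (square 0 m)
      (Finset.box n : Finset (ℤ × ℤ))}ᶜ ≤ 16 * ε := by
  have hbad (s : ℤ) (hs : s = 0 ∨ s = 1) :
      fair.real (⋃ t, (armEvent s n (square s m) (octant s n t))ᶜ) ≤ 8 * ε :=
    calc fair.real (⋃ t, (armEvent s n (square s m) (octant s n t))ᶜ)
        ≤ ∑ t, fair.real (armEvent s n (square s m) (octant s n t))ᶜ :=
          measureReal_iUnion_fintype_le _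
      _ ≤ ∑ _t : Bool × Bool × Bool, ε := Finset.sum_le_sum fun t _ => by
          rw [probReal_compl_eq_one_sub measurableSet_armEvent]
          linarith [h s hs t]
      _ = 8 * ε := by simp
  have hmeas : MeasurableSet (⋃ t, (armEvent 1 n (square 1 m) (octant 1 n t))ᶜ) :=
    .iUnion fun t => measurableSet_armEvent.compl
  have hsub : {ω | IsTrifurcation (confine (openGraph ω) (square 0 n)) (square 0 m)
        (Finset.box n : Finset (ℤ × ℤ))}ᶜ ⊆
      (⋃ t, (armEvent 0 n (square 0 m) (octant 0 n t))ᶜ) ∪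
        dual ⁻¹' ⋃ t, (armEvent 1 n (square 1 m) (octant 1 n t))ᶜ := by
    intro ω hω
    by_contra hgood
    simp only [mem_union, mem_iUnion, mem_preimage, mem_compl_iff, not_or, not_exists,
      not_not] at hgood
    exact hω (isTrifurcation_of_hasArm hmn hgood.1 hgood.2)
  calc _ ≤ _ := measureReal_mono hsub
    _ ≤ _ := measureReal_union_le _ _
    _ ≤ 8 * ε + 8 * ε := by
        refine add_le_add (hbad 0 (.inl rfl)) ?_
        rw [measurePreserving_dual.measureReal_preimage hmeas.nullMeasurableSet]
        exact hbad 1 (.inr rfl)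
    _ = 16 * ε := by ring

/-- A trifurcation at `square 0 m` in `square 0 n` such that moreover all edges inside
`square 0 m` are open. -/
def IsOpenTrifurcation (G : SimpleGraph (ℤ × ℤ)) (m n : ℕ) : Prop :=
  IsTrifurcation (confine G (square 0 n)) (square 0 m) (Finset.box n : Finset (ℤ × ℤ)) ∧
    confine lattice (square 0 m) ≤ G

lemma confine_lattice_le_openGraph_iff {ω : Edge → Bool} :
    confine lattice S ≤ openGraph ω ↔ ∀ e ∈ edgesIn S, ω e = true := by
  refine ⟨fun h e he => ?_, fun h u v ⟨⟨e, _, he⟩, hu, hv⟩ => ⟨e, h e fun w hw => ?_, he⟩⟩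
  · rw [← ends_mem_edgeSet]
    exact h ⟨⟨e, rfl, rfl⟩, he _ (Sym2.mem_mk_left _ _), he _ (Sym2.mem_mk_right _ _)⟩
  · rw [he, Sym2.mem_iff] at hw
    rcases hw with rfl | rfl <;> assumption

lemma dependsOn_confine_lattice_le :
    DependsOn (· ∈ {ω | confine lattice S ≤ openGraph ω}) (edgesIn S) := fun ω ω' h => by
  simp only [mem_ofPred_eq, confine_lattice_le_openGraph_iff]
  exact propext (forall₂_congr fun e he => by rw [h e he])

lemma fair_confine_lattice_le_pos (hS : S.Finite) :
    0 < fair {ω | confine lattice S ≤ openGraph ω} := by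
  have hpi : {ω : Edge → Bool | confine lattice S ≤ openGraph ω} =
      ((finite_edgesIn hS).toFinset : Set Edge).pi fun _ => {true} := by
    ext ω
    simp only [mem_ofPred_eq, confine_lattice_le_openGraph_iff, Finite.coe_toFinset, mem_pi,
      mem_singleton_iff]
  rw [hpi, fair, Measure.infinitePi_pi _ fun _ _ => measurableSet_singleton _,
    CanonicallyOrderedAdd.prod_pos]
  intro e _
  rw [uniformOn_univ_singleton]
  exact ENNReal.inv_pos.2 (ENNReal.natCast_ne_top _)

lemma dependsOn_isTrifurcation_compl {B E : Set (ℤ × ℤ)} :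
    DependsOn (· ∈ {ω | IsTrifurcation (confine (openGraph ω) S) B E}) (edgesIn B)ᶜ := by
  have himp {ω ω' : Edge → Bool} (h : ∀ e ∈ (edgesIn B)ᶜ, ω e = ω' e)
      (hω : IsTrifurcation (confine (openGraph ω) S) B E) :
      IsTrifurcation (confine (openGraph ω') S) B E :=
    hω.of_adj_iff_off fun a ha b => and_congr_left fun _ => openGraph_adj_congr_off h a ha b
  exact fun ω ω' h => propext ⟨himp h, himp fun e he => (h e he).symm⟩

lemma measurableSet_isTrifurcation (hS : S.Finite) {B E : Set (ℤ × ℤ)} :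
    MeasurableSet {ω | IsTrifurcation (confine (openGraph ω) S) B E} :=
  measurableSet_of_dependsOn (finite_edgesIn hS)
    (dependsOn_confine_openGraph fun G => IsTrifurcation G B E)

lemma measurableSet_confine_lattice_le (hS : S.Finite) :
    MeasurableSet {ω | confine lattice S ≤ openGraph ω} :=
  measurableSet_of_dependsOn (finite_edgesIn hS) dependsOn_confine_lattice_le

lemma measurableSet_isOpenTrifurcation :
    MeasurableSet {ω | IsOpenTrifurcation (openGraph ω) m n} :=
  (measurableSet_isTrifurcation finite_square).inter
    (measurableSet_confine_lattice_le finite_square)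

theorem exists_pos_forall_le_fair_real_isOpenTrifurcation (h : fair (percolatesFrom {0}) ≠ 0) :
    ∃ (m : ℕ) (c : ℝ), 0 < c ∧ ∀ n > m,
      c ≤ fair.real {ω | IsOpenTrifurcation (openGraph ω) m n} := by
  obtain ⟨m, hm⟩ := exists_forall_fair_real_armEvent_ge h (ε := 1 / 32) (by norm_num)
  have hopen : 0 < fair.real {ω | confine lattice (square 0 m) ≤ openGraph ω} :=
    ENNReal.toReal_pos (fair_confine_lattice_le_pos finite_square).ne' (measure_ne_top _ _)
  refine ⟨m, 1 / 2 * fair.real {ω | confine lattice (square 0 m) ≤ openGraph ω}, by positivity,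
    fun n hmn => ?_⟩
  have hmeas := measurableSet_isTrifurcation finite_square (S := square 0 n)
    (B := square 0 m) (E := (Finset.box n : Finset (ℤ × ℤ)))
  have htri := fair_real_compl_isTrifurcation_le hmn (hm n hmn.le)
  rw [probReal_compl_eq_one_sub hmeas] at htri
  have hindep := infinitePi_inter_of_disjoint (fun _ => uniformOn univ) disjoint_compl_left hmeas
    (measurableSet_confine_lattice_le finite_square) dependsOn_isTrifurcation_compl
    (dependsOn_confine_lattice_le (S := square 0 m))
  calc 1 / 2 * fair.real {ω | confine lattice (square 0 m) ≤ openGraph ω}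
      ≤ fair.real {ω | IsTrifurcation (confine (openGraph ω) (square 0 n)) (square 0 m)
            (Finset.box n : Finset (ℤ × ℤ))} *
          fair.real {ω | confine lattice (square 0 m) ≤ openGraph ω} :=
        mul_le_mul_of_nonneg_right (by linarith) hopen.le
    _ = fair.real {ω | IsOpenTrifurcation (openGraph ω) m n} := by
        rw [Measure.real, Measure.real, ← ENNReal.toReal_mul]
        exact congrArg ENNReal.toReal hindep.symm

end FairTrifurcation

section TrifurcationCount

variable {G : SimpleGraph (ℤ × ℤ)} {m N : ℕ} {x y : ℤ × ℤ}

/-- The square of radius `r` with centre `x`. -/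
def squareAt (x : ℤ × ℤ) (r : ℤ) : Set (ℤ × ℤ) := (Equiv.addRight x).symm ⁻¹' square 0 r

lemma mem_squareAt {r : ℤ} {u : ℤ × ℤ} : u ∈ squareAt x r ↔
    (-r ≤ u.1 - x.1 ∧ u.1 - x.1 ≤ r) ∧ -r ≤ u.2 - x.2 ∧ u.2 - x.2 ≤ r := by
  simp [squareAt, mem_square, sub_eq_add_neg]

lemma IsOpenTrifurcation.isTrifurcation_squareAt (hG : G ≤ lattice)
    (h : IsOpenTrifurcation (G.comap (Equiv.addRight x)) m (2 * N))
    (hx : x ∈ square 0 (N - m - 1)) :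
    IsTrifurcation (confine G (square 0 N)) (squareAt x m) (Finset.box N : Finset (ℤ × ℤ)) := by
  have hconf (S : Set (ℤ × ℤ)) : (confine G S).comap (Equiv.addRight x) =
      confine (G.comap (Equiv.addRight x)) (Equiv.addRight x ⁻¹' S) := rfl
  have hpre (S : Set (ℤ × ℤ)) :
      Equiv.addRight x ⁻¹' ((Equiv.addRight x).symm ⁻¹' S) = S :=
    (Equiv.addRight x).preimage_symm_preimage S
  have htri : IsTrifurcation (confine G (squareAt x (2 * N))) (squareAt x m)
      ((Equiv.addRight x).symm ⁻¹' (Finset.box (2 * N) : Finset (ℤ × ℤ))) :=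
    .of_comap (Equiv.addRight x) (by
      simpa only [squareAt, hconf, hpre, Nat.cast_mul, Nat.cast_ofNat] using h.1)
  rw [mem_square] at hx
  refine htri.confine_of_subset (fun u hu => ?_) (disjoint_left.2 fun u hu => ?_) (fun u hu => ?_)
    (fun u hu v huv => ?_) fun u hu v hv huv => ?_
  · simp only [mem_square, mem_squareAt] at *
    omega
  · simp only [mem_preimage, Finset.mem_coe, Int.mem_box, mem_square, Equiv.addRight_symm,
      Equiv.coe_addRight, Prod.fst_add, Prod.snd_add, Prod.fst_neg, Prod.snd_neg] at *
    omega
  · simp only [mem_square, mem_squareAt] at *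
    omega
  · have := lattice_adj.1 (hG huv)
    simp only [mem_square, mem_squareAt] at *
    omega
  · have := lattice_adj.1 (hG huv)
    simp only [mem_square, Finset.mem_coe, Int.mem_box] at *
    omega

lemma IsOpenTrifurcation.reachable_confine_squareAt {n : ℕ} {u v : ℤ × ℤ}
    (h : IsOpenTrifurcation (G.comap (Equiv.addRight x)) m n) (hu : u ∈ squareAt x m)
    (hv : v ∈ squareAt x m) : (confine G (squareAt x m)).Reachable u v := by
  have hle : confine lattice (square 0 m) ≤
      (confine G (squareAt x m)).comap (Equiv.addRight x) :=
    fun a b hab => ⟨h.2 hab, by simpa [squareAt] using hab.2⟩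
  simpa using (reachable_comap_equiv _ _).1 ((reachable_confine_square hu hv).mono hle)

/-- Centres of `K ^ 2` disjoint squares of radius `m`. -/
def centre (m : ℕ) (i : ℕ × ℕ) : ℤ × ℤ := ((2 * m + 1) * i.1, (2 * m + 1) * i.2)

lemma pairwise_disjoint_squareAt_centre :
    Pairwise (Function.onFun Disjoint fun i => squareAt (centre m i) m) := by
  intro i j hij
  refine disjoint_left.2 fun u hi hj => hij ?_
  simp only [mem_squareAt, centre] at hi hj
  have heq {a b : ℕ} {c : ℤ} (h₁ : -m ≤ c - (2 * m + 1) * a) (h₂ : c - (2 * m + 1) * a ≤ m)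
      (h₃ : -m ≤ c - (2 * m + 1) * b) (h₄ : c - (2 * m + 1) * b ≤ m) : a = b := by
    rcases lt_trichotomy a b with h | h | h
    · nlinarith
    · exact h
    · nlinarith
  exact Prod.ext (heq hi.1.1 hi.1.2 hj.1.1 hj.1.2) (heq hi.2.1 hi.2.2 hj.2.1 hj.2.2)

lemma centre_mem_square {K : ℕ} {i : ℕ × ℕ} (hi : i ∈ Finset.range K ×ˢ Finset.range K) :
    centre m i ∈ square 0 (((2 * m + 1) * K : ℕ) - m - 1) := by
  simp only [Finset.mem_product, Finset.mem_range] at hi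
  have hle {a : ℕ} (ha : a < K) : ((2 * m + 1) * a : ℤ) ≤ (2 * m + 1) * (K - 1) :=
    mul_le_mul_of_nonneg_left (by omega) (by positivity)
  have h1 := hle hi.1
  have h2 := hle hi.2
  have h0 {a : ℕ} : (0 : ℤ) ≤ (2 * m + 1) * a := by positivity
  have h3 := h0 (a := i.1)
  have h4 := h0 (a := i.2)
  simp only [mem_square, centre]
  push_cast
  refine ⟨⟨?_, ?_⟩, ?_, ?_⟩ <;> nlinarith

lemma card_le_of_isOpenTrifurcation (hG : G ≤ lattice) {K : ℕ} (hK : 0 < K) {J : Finset (ℕ × ℕ)}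
    (hJ : J ⊆ Finset.range K ×ˢ Finset.range K)
    (h : ∀ i ∈ J, IsOpenTrifurcation (G.comap (Equiv.addRight (centre m i))) m
      (2 * ((2 * m + 1) * K))) : J.card ≤ 8 * ((2 * m + 1) * K) := by
  rw [← Int.card_box (n := (2 * m + 1) * K) (by positivity)]
  refine card_le_of_isTrifurcation (pairwise_disjoint_squareAt_centre.set_pairwise _)
    (fun i hi a ha b hb => ?_)
    fun i hi => (h i hi).isTrifurcation_squareAt hG (centre_mem_square (hJ hi))
  have hsub : squareAt (centre m i) m ⊆ square 0 ((2 * m + 1) * K : ℕ) := fun u hu => by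
    have hc := centre_mem_square (m := m) (hJ hi)
    simp only [mem_square, mem_squareAt] at *
    omega
  refine ((h i hi).reachable_confine_squareAt ha hb).mono ?_
  exact fun u v huv => ⟨⟨huv.1, hsub huv.2.1, hsub huv.2.2⟩, huv.2⟩

theorem fair_percolatesFrom_zero : fair (percolatesFrom {0}) = 0 := by
  by_contra hperc
  obtain ⟨m, c, hc, hmc⟩ := exists_pos_forall_le_fair_real_isOpenTrifurcation hperc
  have hcount {K : ℕ} (hK : 0 < K) : K * c ≤ 8 * (2 * m + 1) := by
    set N := (2 * m + 1) * K
    have hmN : m < 2 * N := by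
      have := Nat.le_mul_of_pos_right (2 * m + 1) hK
      omega
    have htrans (i : ℕ × ℕ) : MeasurableSet {ω | IsOpenTrifurcation
          ((openGraph ω).comap (Equiv.addRight (centre m i))) m (2 * N)} ∧ c ≤ fair.real
        {ω | IsOpenTrifurcation ((openGraph ω).comap (Equiv.addRight (centre m i))) m (2 * N)} := by
      obtain ⟨g, hg, hgω⟩ := exists_measurePreserving_openGraph_comap
        (σ := Equiv.addRight (centre m i)) fun u v => by
          simp only [lattice_adj, Equiv.coe_addRight, Prod.fst_add, Prod.snd_add]
          omega
      simp_rw [← hgω]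
      exact ⟨hg.measurable measurableSet_isOpenTrifurcation, (hmc _ hmN).trans_eq
        (hg.measureReal_preimage measurableSet_isOpenTrifurcation.nullMeasurableSet).symm⟩
    have hsum := sum_measureReal_le_of_card_le fair (I := Finset.range K ×ˢ Finset.range K)
      (fun i _ => (htrans i).1) (M := 8 * N) fun J hJ ⟨ω, hω⟩ =>
        card_le_of_isOpenTrifurcation (openGraph_le_lattice ω) hK hJ
          fun i hi => mem_iInter₂.1 hω i hi
    have hcard := (Finset.card_nsmul_le_sum _ _ c fun i _ => (htrans i).2).trans hsum
    simp only [Finset.card_product, Finset.card_range, nsmul_eq_mul, N] at hcard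
    push_cast at hcard
    refine le_of_mul_le_mul_left (?_ : (K : ℝ) * _ ≤ K * _) (by exact_mod_cast hK)
    linarith
  obtain ⟨K, hK⟩ := exists_nat_gt (8 * (2 * m + 1) / c)
  rw [div_lt_iff₀ hc] at hK
  have hpos : 0 < K := Nat.pos_of_ne_zero fun h => by
    rw [h, Nat.cast_zero, zero_mul] at hK
    exact hK.not_ge (by positivity)
  exact (hcount hpos).not_gt hK

end TrifurcationCount

section Projection

open ProbabilityTheory (uniformOn)

variable {k : ℕ} {ω : Config} {u v : Vtx}

/-- The copy at height `z` of an edge of the square lattice. -/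
def liftEdge (a : Edge × Fin (k + 1)) : EdgeIdx :=
  ((a.1.1.1, a.1.1.2, a.2), if a.1.2 then 1 else 0)

lemma liftEdge_injective : Function.Injective (liftEdge (k := k)) := by
  rintro ⟨⟨⟨x, y⟩, d⟩, z⟩ ⟨⟨⟨x', y'⟩, d'⟩, z'⟩ h
  simp only [liftEdge, Prod.mk.injEq, Nat.cast_inj] at h
  obtain ⟨⟨rfl, rfl, hz⟩, hd⟩ := h
  obtain rfl := Fin.ext hz
  cases d <;> cases d' <;> simp_all

lemma liftEdge_snd_ne_two (a : Edge × Fin (k + 1)) : (liftEdge a).2 ≠ 2 := by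
  rw [liftEdge]
  split_ifs <;> simp

/-- The configuration on the square lattice in which an edge is open when one of its copies in the
slab is. -/
def planarConfig (k : ℕ) (ω : Config) : Edge → Bool := fun e =>
  decide (∃ z : Fin (k + 1), ω (liftEdge (e, z)) = true)

/-- The orthogonal projection of a vertex to the square lattice. -/
def planar (v : Vtx) : ℤ × ℤ := (v.1, v.2.1)

lemma reachable_planar_of_open {i : Fin 3} (he : IsEdge k (u, i)) (ho : ω (u, i) = true) :
    (openGraph (planarConfig k ω)).Reachable (planar u) (planar (u + dvec i)) := by
  obtain ⟨x, y, z⟩ := u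
  obtain ⟨⟨h0, hk⟩, -⟩ := he
  lift z to ℕ using h0
  have hz : z < k + 1 := by simpa [Nat.lt_succ_iff] using hk
  have hadj (d : Bool) (hd : ω ((x, y, z), if d then 1 else 0) = true) :
      (openGraph (planarConfig k ω)).Reachable (x, y) ((x, y) + unitVec d) :=
    SimpleGraph.Adj.reachable ⟨((x, y), d), decide_eq_true ⟨⟨z, hz⟩, hd⟩, rfl⟩
  fin_cases i
  · simpa [planar, dvec, unitVec] using hadj false ho
  · simpa [planar, dvec, unitVec] using hadj true ho
  · simp [planar, dvec]

lemma OpenAdj.reachable_planar (h : OpenAdj k ω u v) :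
    (openGraph (planarConfig k ω)).Reachable (planar u) (planar v) := by
  obtain ⟨i, ⟨rfl, he, ho⟩ | ⟨rfl, he, ho⟩⟩ := h
  · exact reachable_planar_of_open he ho
  · exact (reachable_planar_of_open he ho).symm

lemma OpenAdj.inSlab_right (h : OpenAdj k ω u v) : InSlab k v := by
  obtain ⟨i, ⟨rfl, he, -⟩ | ⟨-, he, -⟩⟩ := h
  · exact he.2
  · exact he.1

lemma planar_mem_openCluster (hv : v ∈ cluster k ω u) :
    planar v ∈ openCluster (planarConfig k ω) (planar u) := by
  induction hv with
  | refl => exact .refl _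
  | tail _ h ih => exact ih.trans h.reachable_planar

lemma inSlab_of_mem_cluster (hu : InSlab k u) (hv : v ∈ cluster k ω u) : InSlab k v := by
  induction hv with
  | refl => exact hu
  | tail _ h _ => exact h.inSlab_right

lemma infinite_openCluster_planarConfig (hu : InSlab k u) (h : (cluster k ω u).Infinite) :
    (openCluster (planarConfig k ω) (planar u)).Infinite := by
  refine fun hfin => h (Finite.subset ((hfin.prod (finite_Icc (0 : ℤ) k)).preimage
    (f := fun v : Vtx => (planar v, v.2.2)) ?_) fun v hv =>
      ⟨planar_mem_openCluster hv, inSlab_of_mem_cluster hu hv⟩)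
  rintro ⟨x, y, z⟩ - ⟨x', y', z'⟩ - heq
  simpa [planar, and_assoc] using heq

lemma one_sub_pCrit_pow (k : ℕ) : (1 - pCrit k) ^ (k + 1) = 1 / 2 := by
  have h := Real.rpow_inv_natCast_pow (n := k + 1) (x := 1 / 2) (by norm_num) (by omega)
  simpa [pCrit] using h

lemma pCrit_nonneg (k : ℕ) : 0 ≤ pCrit k :=
  sub_nonneg.2 (Real.rpow_le_one (by norm_num) (by norm_num) (by positivity))

lemma pCrit_le_one (k : ℕ) : pCrit k ≤ 1 := sub_le_self _ (by positivity)

lemma eq_uniformOn_univ_of_false {μ : Measure Bool} [IsProbabilityMeasure μ]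
    (h : μ {false} = 2⁻¹) : μ = uniformOn univ := by
  have htrue : μ {true} = 2⁻¹ := by
    have hcompl : ({true} : Set Bool) = {false}ᶜ := by
      ext b
      cases b <;> simp
    rw [hcompl, prob_compl_eq_one_sub (measurableSet_singleton _), h, ENNReal.one_sub_inv_two]
  refine measure_eq_of_singleton_le fun b => ?_
  rw [uniformOn_univ_singleton, Fintype.card_bool, Nat.cast_ofNat]
  cases b
  exacts [h.le, htrue.le]

lemma measurable_decide_exists_lt (n : ℕ) (c : ℝ) :
    Measurable fun u : Fin n → ℝ => decide (∃ z, u z < c) := by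
  refine measurable_to_bool ?_
  have : (fun u : Fin n → ℝ => decide (∃ z, u z < c)) ⁻¹' {true} = ⋃ z, {u | u z < c} := by
    ext
    simp
  rw [this]
  exact .iUnion fun z => measurableSet_lt (measurable_pi_apply z) measurable_const

lemma map_decide_exists_lt_pCrit (k : ℕ) :
    (Measure.infinitePi fun _ : Fin (k + 1) => unif).map (fun u => decide (∃ z, u z < pCrit k)) =
      uniformOn univ := by
  have hmeas := measurable_decide_exists_lt (k + 1) (pCrit k)
  have := Measure.isProbabilityMeasure_map
    (μ := Measure.infinitePi fun _ : Fin (k + 1) => unif) hmeas.aemeasurable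
  refine eq_uniformOn_univ_of_false ?_
  have hpre : (fun u : Fin (k + 1) → ℝ => decide (∃ z, u z < pCrit k)) ⁻¹' {false} =
      Set.pi univ fun _ => (Iio (pCrit k))ᶜ := by
    ext
    simp [Pi.le_def]
  rw [Measure.map_apply hmeas (measurableSet_singleton _), hpre, Measure.infinitePi_eq_pi,
    Measure.pi_pi, Finset.prod_const, Finset.card_univ, Fintype.card_fin,
    prob_compl_eq_one_sub measurableSet_Iio, unif_Iio (pCrit_le_one k), ← ENNReal.ofReal_one,
    ← ENNReal.ofReal_sub _ (pCrit_nonneg k),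
    ← ENNReal.ofReal_pow (sub_nonneg.2 (pCrit_le_one k)), one_sub_pCrit_pow, one_div,
    ENNReal.ofReal_inv_of_pos two_pos, ENNReal.ofReal_ofNat]

lemma measurable_planarConfig (k : ℕ) : Measurable (planarConfig k) :=
  measurable_pi_iff.2 fun _ => (measurable_of_finite fun b : Fin (k + 1) → Bool =>
    decide (∃ z, b z = true)).comp (measurable_pi_iff.2 fun _ => measurable_pi_apply _)

theorem map_planarConfig_slabMeasure_pCrit (k : ℕ) (q : ℝ) :
    (slabMeasure k (pCrit k) q).map (planarConfig k) = fair := by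
  have hlift (u : EdgeIdx → ℝ) :
      planarConfig k (fun e => decide (u e < if e.2 = 2 then q else pCrit k)) =
        fun e => decide (∃ z : Fin (k + 1), u (liftEdge (e, z)) < pCrit k) := funext fun _ => by
    simp only [planarConfig, liftEdge_snd_ne_two, if_false, decide_eq_true_eq]
  rw [slabMeasure, bernoulliProduct_eq_map_infinitePi, Measure.map_map (measurable_planarConfig k)
    (measurable_decide_lt_pi _), Function.comp_def]
  simp_rw [hlift]
  rw [infinitePi_map_block unif liftEdge_injective (measurable_decide_exists_lt (k + 1) (pCrit k)),
    map_decide_exists_lt_pCrit, fair]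

lemma planarConfig_mono (k : ℕ) : Monotone (planarConfig k) := fun _ _ h _ => by
  simp only [planarConfig, Bool.le_iff_imp, decide_eq_true_eq] at h ⊢
  exact fun ⟨z, hz⟩ => ⟨z, Bool.le_iff_imp.1 (h _) hz⟩

theorem theta_le_fair_percolatesFrom (k : ℕ) {p : ℝ} (hp : p ≤ pCrit k) (q : ℝ) :
    theta k p q ≤ fair (percolatesFrom {0}) := by
  have hmeas := measurableSet_percolatesFrom {0}
  have hupper : IsUpperSet (planarConfig k ⁻¹' percolatesFrom {0}) :=
    (isUpperSet_percolatesFrom {0}).preimage (planarConfig_mono k)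
  calc theta k p q
      ≤ slabMeasure k p q (planarConfig k ⁻¹' percolatesFrom {0}) := measure_mono fun ω hω =>
        ⟨0, rfl, infinite_openCluster_planarConfig (u := 0) (by simp [InSlab]) hω⟩
    _ ≤ slabMeasure k (pCrit k) q (planarConfig k ⁻¹' percolatesFrom {0}) :=
        bernoulliProduct_mono (fun _ => by split_ifs <;> [rfl; exact hp])
          (measurable_planarConfig k hmeas) hupper
    _ = fair (percolatesFrom {0}) := by
        rw [← Measure.map_apply (measurable_planarConfig k) hmeas,
          map_planarConfig_slabMeasure_pCrit]

end Projection

/-- If `p ≤ p_k` then `θ(p,q) = 0` for every `q ∈ [0,1]`. -/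
theorem theta_eq_zero_of_le_pCrit (k : ℕ) (p q : ℝ)
    (hp0 : 0 ≤ p) (hp : p ≤ pCrit k) (hq : q ∈ Set.Icc (0 : ℝ) 1) :
    theta k p q = 0 :=
  nonpos_iff_eq_zero.1 ((theta_le_fair_percolatesFrom k hp q).trans_eq fair_percolatesFrom_zero)

end AnisoSlab
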